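/- arXiv:1206.3787 — 2 statements merged into one kernel-verified Lean document; each statement's English description precedes it below -/
import Mathlib

section
/- Let N ≥ 1 and t ∈ ℂ^{N+1} with |Im t_j| < π/2 for j = 1,…,N+1. Then the function z ↦ ∏_{1≤m<n≤N} (z_m−z_n)·sinh(z_m−z_n) / ∏_{j=1}^{N+1} ∏_{k=1}^{N} cosh(t_j−z_k) is Lebesgue integrable on ℝ^N, and if moreover t_j ≠ t_k for all 1 ≤ j < k ≤ N+1, then ∫_{ℝ^N} ∏_{1≤m<n≤N} (z_m−z_n)·sinh(z_m−z_n) / ∏_{j=1}^{N+1} ∏_{k=1}^{N} cosh(t_j−z_k) dz = 2^N · ∏_{1≤m<n≤N+1} (t_m−t_n)/sinh(t_m−t_n). -/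
open MeasureTheory Complex

/-!
By Cauchy's determinant in the homogeneous variables `(cosh, sinh)`, the products of `sinh` over
products of `cosh` form a determinant with entries `1 / cosh (t_j - z_k)`. After multiplication by
the Vandermonde determinant of `z`, Andréief's identity turns the integral into `N!` times the
determinant of the moments `∫ x ^ i / (cosh (t_0 - x) cosh (t_j - x)) dx`.

Since `tanh (t_j - x) - tanh (t_0 - x) = sinh (t_j - t_0) / (cosh (t_0 - x) cosh (t_j - x))`, an
integration by parts expresses these moments as differences of `∫ x ^ (i + 1) / cosh² (a - x) dx`
at `a = t_j` and `a = t_0`. Shifting the contour by `a` shows that this integral is twice a monic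
polynomial of degree `i + 1` in `a`, so the moment determinant reduces to the Vandermonde
determinant of `t`.
-/

open Filter Topology Polynomial

section Products

variable {M : Type*} [CommMonoid M]

lemma prod_filter_fst_lt_snd_of_symm {ι : Type*} [Fintype ι] [LinearOrder ι]
    [LocallyFiniteOrderTop ι] (f : ι → ι → M) (hf : ∀ i j, f i j = f j i) :
    ∏ q : ι × ι with q.1 < q.2, f q.1 q.2 = ∏ i, ∏ j ∈ Finset.Ioi i, f j i := by
  rw [Finset.prod_filter, Fintype.prod_prod_type]
  refine Finset.prod_congr rfl fun i _ => ?_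
  rw [← Finset.prod_filter, Finset.filter_lt_eq_Ioi]
  exact Finset.prod_congr rfl fun j _ => hf i j

lemma prod_prod_Ioi_mul {ι : Type*} [Fintype ι] [LinearOrder ι] [LocallyFiniteOrderTop ι]
    [LocallyFiniteOrderBot ι] (h : ι → M) :
    ∏ i, ∏ j ∈ Finset.Ioi i, h i * h j = ∏ i, h i ^ (Fintype.card ι - 1) := by
  rw [Finset.prod_prod_Ioi_mul_eq_prod_prod_off_diag fun _ i => h i]
  simp only [Finset.prod_const, Finset.card_compl, Finset.card_singleton]

lemma prod_prod_Ioi_fin_succ {n : ℕ} (f : Fin (n + 1) → Fin (n + 1) → M) :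
    ∏ i, ∏ j ∈ Finset.Ioi i, f i j =
      (∏ j : Fin n, f 0 j.succ) * ∏ i : Fin n, ∏ j ∈ Finset.Ioi i, f i.succ j.succ := by
  simp only [Fin.prod_univ_succ, Fin.prod_Ioi_zero, Fin.prod_Ioi_succ]

lemma prod_prod_fin_succ {m n : ℕ} (f : Fin (m + 1) → Fin (n + 1) → M) :
    ∏ i, ∏ j, f i j = (f 0 0 * ∏ j : Fin n, f 0 j.succ) *
      ((∏ i : Fin m, f i.succ 0) * ∏ i : Fin m, ∏ j : Fin n, f i.succ j.succ) := by
  simp only [Fin.prod_univ_succ, Finset.prod_mul_distrib]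
  exact mul_mul_mul_comm _ _ _ _

end Products

section Determinants

lemma det_eq_mul_det_of_column_zero_eq_mul {R : Type*} [CommRing R] {n : ℕ}
    (A : Matrix (Fin (n + 1)) (Fin (n + 1)) R) (c : Fin n → R)
    (hc : ∀ i, A i.succ 0 = c i * A 0 0) :
    A.det = A 0 0 * (Matrix.of fun i j : Fin n => A i.succ j.succ - c i * A 0 j.succ).det := by
  let B : Matrix (Fin (n + 1)) (Fin (n + 1)) R :=
    Matrix.of fun i j => A i j - (Fin.cons 0 c : Fin (n + 1) → R) i * A 0 j
  have hAB : A.det = B.det :=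
    Matrix.det_eq_of_forall_row_eq_smul_add_const (Fin.cons 0 c) 0 rfl fun i j => by simp [B]
  rw [hAB, Matrix.det_succ_column_zero, Fin.sum_univ_succ]
  simp [B, hc, Matrix.submatrix]

lemma det_inv_mul_sub_mul_succ {K : Type*} [Field K] {n : ℕ} (x y u v : Fin (n + 1) → K)
    (h : ∀ i j, x i * u j - y i * v j ≠ 0) :
    (Matrix.of fun i j => (x i * u j - y i * v j)⁻¹).det =
      (x 0 * u 0 - y 0 * v 0)⁻¹ *
        ((∏ i : Fin n, (x 0 * y i.succ - x i.succ * y 0) / (x i.succ * u 0 - y i.succ * v 0)) *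
          ((∏ j : Fin n, (u 0 * v j.succ - u j.succ * v 0) / (x 0 * u j.succ - y 0 * v j.succ)) *
            (Matrix.of fun i j : Fin n =>
              (x i.succ * u j.succ - y i.succ * v j.succ)⁻¹).det)) := by
  let f i j := x i * u j - y i * v j
  rw [det_eq_mul_det_of_column_zero_eq_mul _
      (fun i => (x 0 * u 0 - y 0 * v 0) / (x i.succ * u 0 - y i.succ * v 0)) fun i => ?_,
    ← Matrix.det_mul_row, ← Matrix.det_mul_column]
  · congr 2
    ext i j
    have h_col : f i.succ 0 ≠ 0 := h _ _
    have h_row : f 0 j.succ ≠ 0 := h _ _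
    have h_entry : f i.succ j.succ ≠ 0 := h _ _
    change (f i.succ j.succ)⁻¹ - f 0 0 / f i.succ 0 * (f 0 j.succ)⁻¹ =
      (x 0 * y i.succ - x i.succ * y 0) / f i.succ 0 *
        ((u 0 * v j.succ - u j.succ * v 0) / f 0 j.succ * (f i.succ j.succ)⁻¹)
    field_simp
    ring
  · rw [Matrix.of_apply, Matrix.of_apply, div_mul_eq_mul_div, mul_inv_cancel₀ (h 0 0), one_div]

/-- Homogeneous form of Cauchy's determinant. -/
theorem det_inv_mul_sub_mul {K : Type*} [Field K] {n : ℕ} (x y u v : Fin n → K)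
    (h : ∀ i j, x i * u j - y i * v j ≠ 0) :
    (Matrix.of fun i j => (x i * u j - y i * v j)⁻¹).det * ∏ i, ∏ j, (x i * u j - y i * v j) =
      (∏ i, ∏ j ∈ Finset.Ioi i, (x i * y j - x j * y i)) *
        ∏ i, ∏ j ∈ Finset.Ioi i, (u i * v j - u j * v i) := by
  induction n with
  | zero => simp
  | succ n ih =>
    have ih_succ := ih (fun i => x i.succ) (fun i => y i.succ) (fun i => u i.succ)
      (fun i => v i.succ) fun i j => h _ _
    have h_col : ∏ i : Fin n, (x i.succ * u 0 - y i.succ * v 0) ≠ 0 :=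
      Finset.prod_ne_zero_iff.2 fun i _ => h _ _
    have h_row : ∏ j : Fin n, (x 0 * u j.succ - y 0 * v j.succ) ≠ 0 :=
      Finset.prod_ne_zero_iff.2 fun j _ => h _ _
    have h_cancel {c P Q : K} (hc : c ≠ 0) (hP : P ≠ 0) (hQ : Q ≠ 0) (A B D E : K) :
        c⁻¹ * (A / P * (B / Q * D)) * (c * Q * (P * E)) = A * B * (D * E) := by
      field_simp
    rw [det_inv_mul_sub_mul_succ x y u v h, prod_prod_fin_succ, prod_prod_Ioi_fin_succ,
      prod_prod_Ioi_fin_succ, Finset.prod_div_distrib, Finset.prod_div_distrib,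
      mul_mul_mul_comm (∏ j, _) _ (∏ j, _), ← ih_succ]
    exact h_cancel (h 0 0) h_col h_row _ _ _ _

lemma det_inv_cosh_sub {n : ℕ} (t z : Fin n → ℂ) (h : ∀ i j, cosh (t i - z j) ≠ 0) :
    (Matrix.of fun i j => (cosh (t i - z j))⁻¹).det * ∏ i, ∏ j, cosh (t i - z j) =
      (∏ i, ∏ j ∈ Finset.Ioi i, sinh (t j - t i)) *
        ∏ i, ∏ j ∈ Finset.Ioi i, sinh (z j - z i) := by
  simp only [cosh_sub] at h ⊢
  have sinh_sub' (a b : ℂ) : sinh (b - a) = cosh a * sinh b - cosh b * sinh a := by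
    rw [sinh_sub]; ring
  simp only [sinh_sub']
  exact det_inv_mul_sub_mul (cosh ∘ t) (sinh ∘ t) (cosh ∘ z) (sinh ∘ z) h

lemma det_eval_sub_eval {R : Type*} [CommRing R] {n : ℕ} (p : Fin (n + 1) → R[X])
    (hdeg : ∀ i, (p i).natDegree = i) (hmonic : ∀ i, (p i).Monic) (v : Fin (n + 1) → R) :
    (Matrix.of fun i j : Fin n => (p i.succ).eval (v j.succ) - (p i.succ).eval (v 0)).det =
      ∏ i, ∏ j ∈ Finset.Ioi i, (v j - v i) := by
  have hp0 : p 0 = 1 := (hmonic 0).natDegree_eq_zero.1 (by simpa using hdeg 0)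
  rw [← Matrix.det_vandermonde,
    Matrix.det_eval_matrixOfPolynomials_eq_det_vandermonde v p hdeg hmonic,
    det_eq_mul_det_of_column_zero_eq_mul _ 1 (by simp [hp0]), ← Matrix.det_transpose]
  simp [hp0, Matrix.transpose]

end Determinants

section Andreief

variable {ι α 𝕜 : Type*} [Fintype ι] [DecidableEq ι] [RCLike 𝕜] [MeasurableSpace α]
  {μ : Measure α} [SigmaFinite μ]

lemma det_mul_det_eq_sum_sum {R : Type*} [CommRing R] (A B : Matrix ι ι R) :
    A.det * B.det = ∑ τ : Equiv.Perm ι, ∑ σ : Equiv.Perm ι,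
      (Equiv.Perm.sign τ : ℤ) * (Equiv.Perm.sign σ : ℤ) * ∏ k, (A (σ k) k * B (τ k) k) := by
  rw [mul_comm, Matrix.det_apply', Matrix.det_apply', Finset.sum_mul_sum]
  simp only [Finset.prod_mul_distrib]
  exact Finset.sum_congr rfl fun τ _ => Finset.sum_congr rfl fun σ _ => by ring

lemma sum_sign_mul_sign_mul_prod {R : Type*} [CommRing R] (A : Matrix ι ι R)
    (τ : Equiv.Perm ι) :
    ∑ σ : Equiv.Perm ι, (Equiv.Perm.sign τ : ℤ) * (Equiv.Perm.sign σ : ℤ) *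
      ∏ k, A (σ k) (τ k) = A.det := by
  have sign_mul_self : ((Equiv.Perm.sign τ : ℤ) : R) * (Equiv.Perm.sign τ : ℤ) = 1 := by
    rw [← Int.cast_mul, ← Units.val_mul, Int.units_mul_self, Units.val_one, Int.cast_one]
  calc
    _ = (Equiv.Perm.sign τ : ℤ) * (A.submatrix id τ).det := by
      simp only [Matrix.det_apply', Finset.mul_sum, mul_assoc, Matrix.submatrix_apply, id]
    _ = A.det := by rw [Matrix.det_permute', ← mul_assoc, sign_mul_self, one_mul]

/-- Andréief's identity. -/
theorem integral_det_mul_det (φ ψ : ι → α → 𝕜)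
    (h : ∀ i j, Integrable (fun x => φ i x * ψ j x) μ) :
    ∫ z : ι → α, (Matrix.of fun i k => φ i (z k)).det * (Matrix.of fun j k => ψ j (z k)).det
        ∂Measure.pi (fun _ => μ) =
      (Fintype.card ι).factorial * (Matrix.of fun i j => ∫ x, φ i x * ψ j x ∂μ).det := by
  have h_int (τ σ : Equiv.Perm ι) : Integrable (fun z : ι → α =>
      ((Equiv.Perm.sign τ : ℤ) : 𝕜) * (Equiv.Perm.sign σ : ℤ) *
        ∏ k, (φ (σ k) (z k) * ψ (τ k) (z k))) (Measure.pi fun _ => μ) :=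
    (Integrable.fintype_prod (f := fun k x => φ (σ k) x * ψ (τ k) x)
      fun k => h (σ k) (τ k)).const_mul _
  simp only [det_mul_det_eq_sum_sum, Matrix.of_apply]
  rw [integral_finsetSum _ fun τ _ => integrable_finsetSum _ fun σ _ => h_int τ σ]
  have inner_sum (τ : Equiv.Perm ι) : ∫ z : ι → α, ∑ σ : Equiv.Perm ι,
      ((Equiv.Perm.sign τ : ℤ) : 𝕜) * (Equiv.Perm.sign σ : ℤ) *
        ∏ k, (φ (σ k) (z k) * ψ (τ k) (z k)) ∂(Measure.pi fun _ => μ) =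
      (Matrix.of fun i j => ∫ x, φ i x * ψ j x ∂μ).det := by
    rw [integral_finsetSum _ fun σ _ => h_int τ σ, ← sum_sign_mul_sign_mul_prod _ τ]
    refine Finset.sum_congr rfl fun σ _ => ?_
    rw [integral_const_mul, integral_fintype_prod_eq_prod fun k x => φ (σ k) x * ψ (τ k) x]
    rfl
  simp only [inner_sum, Finset.sum_const, Finset.card_univ, Fintype.card_perm, nsmul_eq_mul]

end Andreief

section ContourShift

variable {F : ℂ → ℂ} {g : ℝ → ℝ}

lemma tendsto_integral_vertical_segment {c : ℝ} (hg : Tendsto g (cocompact ℝ) (𝓝 0))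
    (hbound : ∀ w : ℂ, w.im ∈ Set.uIcc 0 c → ‖F w‖ ≤ g w.re) :
    Tendsto (fun T : ℝ => ∫ y in (0 : ℝ)..c, F (T + y * I)) (cocompact ℝ) (𝓝 0) := by
  refine squeeze_zero_norm (a := fun T => g T * |c - 0|) (fun T => ?_) ?_
  · refine intervalIntegral.norm_integral_le_of_norm_le_const fun y hy => ?_
    simpa using hbound (T + y * I) (by simpa using Set.uIoc_subset_uIcc hy)
  · simpa using hg.mul_const |c - 0|

lemma integral_horizontal_sub_integral_horizontal {c : ℝ}
    (hF : DifferentiableOn ℂ F (im ⁻¹' Set.uIcc 0 c)) (T : ℝ) :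
    ((∫ x in -T..T, F (x + c * I)) - ∫ x in -T..T, F x) =
      I * (∫ y in (0 : ℝ)..c, F (T + y * I)) - I * ∫ y in (0 : ℝ)..c, F ((-T : ℝ) + y * I) := by
  have h_rect := integral_boundary_rect_eq_zero_of_differentiableOn F (-T : ℝ) (T + c * I)
    (hF.mono fun w hw => by simpa using hw.2)
  simp only [ofReal_neg, neg_im, ofReal_im, neg_zero, ofReal_zero, zero_mul, add_zero, neg_re,
    ofReal_re, add_re, mul_re, I_re, mul_zero, I_im, mul_one, sub_self, add_im, mul_im, zero_add,
    smul_eq_mul] at h_rect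
  push_cast
  linear_combination -h_rect

theorem integral_add_mul_I_eq_integral {c : ℝ} (hF : DifferentiableOn ℂ F (im ⁻¹' Set.uIcc 0 c))
    (hg : Integrable g) (hg₀ : Tendsto g (cocompact ℝ) (𝓝 0))
    (hbound : ∀ w : ℂ, w.im ∈ Set.uIcc 0 c → ‖F w‖ ≤ g w.re) :
    ∫ x : ℝ, F (x + c * I) = ∫ x : ℝ, F x := by
  have h_int (b : ℝ) (hb : b ∈ Set.uIcc 0 c) : Integrable fun x : ℝ => F (x + b * I) := by
    refine hg.mono' (Continuous.aestronglyMeasurable ?_) (ae_of_all _ fun x => ?_)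
    · exact hF.continuousOn.comp_continuous (by fun_prop) fun x => by simpa using hb
    · simpa using hbound (x + b * I) (by simpa using hb)
  have h_top := intervalIntegral_tendsto_integral (h_int c Set.right_mem_uIcc)
    tendsto_neg_atTop_atBot tendsto_id
  have h_bot := intervalIntegral_tendsto_integral (by simpa using h_int 0 Set.left_mem_uIcc)
    tendsto_neg_atTop_atBot tendsto_id
  have h_vert := tendsto_integral_vertical_segment hg₀ hbound
  have h_right := h_vert.mono_left atTop_le_cocompact
  have h_left := (h_vert.mono_left atBot_le_cocompact).comp tendsto_neg_atTop_atBot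
  have h_diff := (h_right.const_mul I).sub (h_left.const_mul I)
  rw [mul_zero, sub_zero] at h_diff
  refine sub_eq_zero.1 (tendsto_nhds_unique (h_top.sub h_bot) (h_diff.congr fun T => ?_))
  exact (integral_horizontal_sub_integral_horizontal hF T).symm

end ContourShift

section HyperbolicBounds

lemma abs_sinh_le_exp_abs (x : ℝ) : |Real.sinh x| ≤ Real.exp |x| := by
  rw [Real.abs_sinh, Real.sinh_eq]
  linarith [Real.exp_pos |x|, Real.exp_pos (-|x|)]

lemma cos_im_mul_exp_abs_re_le_two_mul_norm_cosh {w : ℂ} (hw : |w.im| ≤ Real.pi / 2) :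
    Real.cos w.im * Real.exp |w.re| ≤ 2 * ‖cosh w‖ := by
  have h_cos : 0 ≤ Real.cos w.im := Real.cos_nonneg_of_mem_Icc (abs_le.1 hw)
  have h_exp : Real.exp |w.re| ≤ 2 * Real.cosh w.re := by
    rw [← Real.cosh_abs, Real.cosh_eq]
    linarith [Real.exp_pos (-|w.re|)]
  have h_re : (cosh w).re = Real.cosh w.re * Real.cos w.im := by
    conv_lhs => rw [← re_add_im w, cosh_add, cosh_mul_I, sinh_mul_I]
    simp [← ofReal_cosh, ← ofReal_sinh, ← ofReal_cos, ← ofReal_sin]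
  calc
    Real.cos w.im * Real.exp |w.re| ≤ Real.cos w.im * (2 * Real.cosh w.re) := by gcongr
    _ = 2 * (cosh w).re := by rw [h_re]; ring
    _ ≤ 2 * ‖cosh w‖ := by gcongr; exact re_le_norm _

lemma cosh_ne_zero_of_abs_im_lt {w : ℂ} (hw : |w.im| < Real.pi / 2) : cosh w ≠ 0 := by
  have h_cos : 0 < Real.cos w.im := Real.cos_pos_of_mem_Ioo (abs_lt.1 hw)
  have h_le := cos_im_mul_exp_abs_re_le_two_mul_norm_cosh hw.le
  exact norm_pos_iff.1 (by linarith [mul_pos h_cos (Real.exp_pos |w.re|)])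

lemma sinh_ne_zero_of_abs_im_lt {w : ℂ} (hw : |w.im| < Real.pi) (hw₀ : w ≠ 0) :
    sinh w ≠ 0 := by
  contrapose! hw₀
  rw [← re_add_im w, sinh_add, cosh_mul_I, sinh_mul_I] at hw₀
  have h_re : Real.sinh w.re * Real.cos w.im = 0 := by
    simpa [← ofReal_cosh, ← ofReal_sinh, ← ofReal_cos, ← ofReal_sin] using congrArg re hw₀
  have h_im : Real.cosh w.re * Real.sin w.im = 0 := by
    simpa [← ofReal_cosh, ← ofReal_sinh, ← ofReal_cos, ← ofReal_sin] using congrArg im hw₀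
  have im_eq : w.im = 0 := by
    rw [← Real.sin_eq_zero_iff_of_lt_of_lt (abs_lt.1 hw).1 (abs_lt.1 hw).2]
    exact (mul_eq_zero.1 h_im).resolve_left (Real.cosh_pos _).ne'
  have re_eq : w.re = 0 := by simpa [im_eq] using h_re
  exact Complex.ext re_eq im_eq

lemma cosh_sub_ofReal_ne_zero {a : ℂ} (ha : |a.im| < Real.pi / 2) (x : ℝ) :
    cosh (a - x) ≠ 0 :=
  cosh_ne_zero_of_abs_im_lt (by simpa using ha)

lemma exists_norm_inv_cosh_sub_le {a : ℂ} (ha : |a.im| < Real.pi / 2) :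
    ∃ C, 0 < C ∧ ∀ x : ℝ, ‖(cosh (a - x))⁻¹‖ ≤ C * Real.exp (-|x|) := by
  have h_cos : 0 < Real.cos a.im := Real.cos_pos_of_mem_Ioo (abs_lt.1 ha)
  refine ⟨2 * Real.exp |a.re| / Real.cos a.im, by positivity, fun x => ?_⟩
  have h_le := cos_im_mul_exp_abs_re_le_two_mul_norm_cosh (w := a - x) (by simpa using ha.le)
  have h_pos := norm_pos_iff.2 (cosh_sub_ofReal_ne_zero ha x)
  have h_exp : Real.exp |x| ≤ Real.exp |a.re| * Real.exp |a.re - x| := by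
    rw [← Real.exp_add, Real.exp_le_exp]
    linarith [abs_sub_abs_le_abs_sub x a.re, abs_sub_comm x a.re]
  simp only [sub_im, ofReal_im, sub_zero, sub_re, ofReal_re] at h_le
  rw [norm_inv, Real.exp_neg, ← div_eq_mul_inv, div_div, inv_le_comm₀ h_pos (by positivity),
    inv_div, div_le_iff₀ (by positivity)]
  calc
    Real.cos a.im * Real.exp |x| ≤ Real.cos a.im * (Real.exp |a.re| * Real.exp |a.re - x|) := by
      gcongr
    _ = Real.exp |a.re| * (Real.cos a.im * Real.exp |a.re - x|) := by ring
    _ ≤ Real.exp |a.re| * (2 * ‖cosh (a - x)‖) := by gcongr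
    _ = ‖cosh (a - x)‖ * (2 * Real.exp |a.re|) := by ring

end HyperbolicBounds

section DecayWeight

/-- The common majorant `(1 + |x|) ^ k * e ^ (-2 |x|)` of the integrands below: `k` counts
polynomial factors and `e ^ (-2 |x|)` is the decay of a product of two factors `1 / cosh`. -/
noncomputable def decayWeight (k : ℕ) (x : ℝ) : ℝ :=
  (1 + |x|) ^ k * Real.exp (-2 * |x|)

lemma decayWeight_nonneg (k : ℕ) (x : ℝ) : 0 ≤ decayWeight k x := by
  rw [decayWeight]; positivity

lemma pow_mul_exp_neg_abs_pow (k : ℕ) (x : ℝ) :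
    ((1 + |x|) * Real.exp |x|) ^ k * Real.exp (-|x|) ^ (k + 2) = decayWeight k x := by
  rw [decayWeight, neg_mul, two_mul, Real.exp_neg, Real.exp_neg, Real.exp_add, inv_pow,
    mul_pow]
  field_simp
  ring

lemma decayWeight_le (k : ℕ) (x : ℝ) :
    decayWeight k x ≤ 2 * k.factorial * Real.exp 1 * (1 + x ^ 2)⁻¹ := by
  have h_pow : (1 + |x|) ^ k ≤ k.factorial * (Real.exp 1 * Real.exp |x|) := by
    rw [← Real.exp_add, mul_comm, ← div_le_iff₀ (by positivity)]
    exact Real.pow_div_factorial_le_exp _ (by positivity) k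
  have h_exp : Real.exp (-|x|) ≤ 2 * (1 + x ^ 2)⁻¹ := by
    rw [Real.exp_neg, ← div_eq_mul_inv, inv_le_comm₀ (by positivity) (by positivity), inv_div]
    linarith [Real.quadratic_le_exp_of_nonneg (abs_nonneg x), sq_abs x, abs_nonneg x]
  calc
    decayWeight k x ≤ k.factorial * (Real.exp 1 * Real.exp |x|) * Real.exp (-2 * |x|) := by
      rw [decayWeight]; gcongr
    _ = k.factorial * Real.exp 1 * Real.exp (-|x|) := by
      rw [show -|x| = |x| + -2 * |x| by ring, Real.exp_add]; ring
    _ ≤ k.factorial * Real.exp 1 * (2 * (1 + x ^ 2)⁻¹) := by gcongr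
    _ = 2 * k.factorial * Real.exp 1 * (1 + x ^ 2)⁻¹ := by ring

lemma continuous_decayWeight (k : ℕ) : Continuous (decayWeight k) := by
  unfold decayWeight; fun_prop

lemma integrable_decayWeight (k : ℕ) : Integrable (decayWeight k) :=
  (integrable_inv_one_add_sq.const_mul _).mono' (continuous_decayWeight k).aestronglyMeasurable
    (ae_of_all _ fun x => (Real.norm_of_nonneg (decayWeight_nonneg k x)).trans_le
      (decayWeight_le k x))

lemma tendsto_decayWeight_cocompact (k : ℕ) : Tendsto (decayWeight k) (cocompact ℝ) (𝓝 0) := by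
  have h_sq : Tendsto (fun x : ℝ => 1 + x ^ 2) (cocompact ℝ) atTop := by
    simpa using tendsto_atTop_add_const_left _ 1
      ((tendsto_pow_atTop two_ne_zero).comp (tendsto_norm_cocompact_atTop (E := ℝ)))
  refine squeeze_zero (decayWeight_nonneg k) (decayWeight_le k) ?_
  simpa using h_sq.inv_tendsto_atTop.const_mul (2 * k.factorial * Real.exp 1)

end DecayWeight

section Moments

/-- The `k`-th moment of the density `1 / (cosh (a - x) cosh (b - x))` on `ℝ`. -/
noncomputable def coshMoment (k : ℕ) (a b : ℂ) : ℂ :=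
  ∫ x : ℝ, (x : ℂ) ^ k / (cosh (a - x) * cosh (b - x))

lemma integrable_pow_div_cosh_mul_cosh (k : ℕ) {a b : ℂ} (ha : |a.im| < Real.pi / 2)
    (hb : |b.im| < Real.pi / 2) :
    Integrable fun x : ℝ => (x : ℂ) ^ k / (cosh (a - x) * cosh (b - x)) := by
  obtain ⟨A, hA, hA_le⟩ := exists_norm_inv_cosh_sub_le ha
  obtain ⟨B, -, hB_le⟩ := exists_norm_inv_cosh_sub_le hb
  refine ((integrable_decayWeight k).const_mul (A * B)).mono'
    (Continuous.aestronglyMeasurable ?_) (ae_of_all _ fun x => ?_)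
  · exact Continuous.div (by fun_prop) (by fun_prop) fun x =>
      mul_ne_zero (cosh_sub_ofReal_ne_zero ha x) (cosh_sub_ofReal_ne_zero hb x)
  · rw [div_eq_mul_inv, mul_inv, norm_mul, norm_mul, norm_pow, norm_real, Real.norm_eq_abs]
    calc
      _ ≤ (1 + |x|) ^ k * ((A * Real.exp (-|x|)) * (B * Real.exp (-|x|))) := by
        gcongr
        · linarith
        · exact hA_le x
        · exact hB_le x
      _ = A * B * decayWeight k x := by
        rw [decayWeight, show -2 * |x| = -|x| + -|x| by ring, Real.exp_add]; ring

lemma integrable_eval_div_cosh_mul_cosh (p : ℂ[X]) {a b : ℂ} (ha : |a.im| < Real.pi / 2)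
    (hb : |b.im| < Real.pi / 2) :
    Integrable fun x : ℝ => p.eval (x : ℂ) / (cosh (a - x) * cosh (b - x)) := by
  simp only [eval_eq_sum_range, Finset.sum_div, mul_div_assoc]
  exact integrable_finsetSum _ fun i _ =>
    (integrable_pow_div_cosh_mul_cosh i ha hb).const_mul _

lemma hasDerivAt_tanh_sub_ofReal {a : ℂ} (ha : |a.im| < Real.pi / 2) (x : ℝ) :
    HasDerivAt (fun x : ℝ => tanh (a - x)) (-(cosh (a - x) * cosh (a - x))⁻¹) x := by
  have h_cosh := cosh_sub_ofReal_ne_zero ha x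
  have h_sub : HasDerivAt (fun w : ℂ => a - w) (-1) x := (hasDerivAt_id _).const_sub a
  refine (h_sub.csinh.div h_sub.ccosh h_cosh).comp_ofReal.congr_deriv ?_
  field_simp
  linear_combination -cosh_sq (a - x)

lemma tanh_sub_tanh {a b : ℂ} (ha : cosh a ≠ 0) (hb : cosh b ≠ 0) :
    tanh b - tanh a = sinh (b - a) / (cosh a * cosh b) := by
  rw [tanh_eq_sinh_div_cosh, tanh_eq_sinh_div_cosh, sinh_sub]
  field_simp

lemma tanh_sub_ofReal_sub_tanh_sub_ofReal {a b : ℂ} (ha : |a.im| < Real.pi / 2)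
    (hb : |b.im| < Real.pi / 2) (x : ℝ) :
    tanh (b - x) - tanh (a - x) = sinh (b - a) / (cosh (a - x) * cosh (b - x)) := by
  rw [tanh_sub_tanh (cosh_sub_ofReal_ne_zero ha x) (cosh_sub_ofReal_ne_zero hb x),
    sub_sub_sub_cancel_right]

lemma hasDerivAt_pow_mul_tanh_sub_tanh (k : ℕ) {a b : ℂ} (ha : |a.im| < Real.pi / 2)
    (hb : |b.im| < Real.pi / 2) (x : ℝ) :
    HasDerivAt (fun x : ℝ => (x : ℂ) ^ (k + 1) * (tanh (b - x) - tanh (a - x)))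
      ((k + 1) * sinh (b - a) * ((x : ℂ) ^ k / (cosh (a - x) * cosh (b - x))) -
        ((x : ℂ) ^ (k + 1) / (cosh (b - x) * cosh (b - x)) -
          (x : ℂ) ^ (k + 1) / (cosh (a - x) * cosh (a - x)))) x := by
  refine (((hasDerivAt_pow (k + 1) (x : ℂ)).comp_ofReal).mul
    ((hasDerivAt_tanh_sub_ofReal hb x).sub (hasDerivAt_tanh_sub_ofReal ha x))).congr_deriv ?_
  simp only [Pi.sub_apply, tanh_sub_ofReal_sub_tanh_sub_ofReal ha hb x, Nat.cast_add, Nat.cast_one,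
    Nat.add_sub_cancel]
  ring

lemma sinh_sub_mul_coshMoment (k : ℕ) {a b : ℂ} (ha : |a.im| < Real.pi / 2)
    (hb : |b.im| < Real.pi / 2) :
    (k + 1) * sinh (b - a) * coshMoment k a b =
      coshMoment (k + 1) b b - coshMoment (k + 1) a a := by
  have h_int_ab := (integrable_pow_div_cosh_mul_cosh k ha hb).const_mul ((k + 1) * sinh (b - a))
  have h_int_a := integrable_pow_div_cosh_mul_cosh (k + 1) ha ha
  have h_int_b := integrable_pow_div_cosh_mul_cosh (k + 1) hb hb
  have h_int : Integrable fun x : ℝ => (x : ℂ) ^ (k + 1) * (tanh (b - x) - tanh (a - x)) := by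
    refine ((integrable_pow_div_cosh_mul_cosh (k + 1) ha hb).const_mul (sinh (b - a))).congr
      (ae_of_all _ fun x => ?_)
    simp only [tanh_sub_ofReal_sub_tanh_sub_ofReal ha hb]
    ring
  have h_zero := integral_eq_zero_of_hasDerivAt_of_integrable
    (hasDerivAt_pow_mul_tanh_sub_tanh k ha hb) (h_int_ab.sub (h_int_b.sub h_int_a)) h_int
  rw [integral_sub h_int_ab (by exact h_int_b.sub h_int_a), integral_sub h_int_b h_int_a,
    integral_const_mul] at h_zero
  exact sub_eq_zero.1 h_zero

lemma norm_pow_div_cosh_sq_le (k : ℕ) {c : ℝ} (hc : |c| < Real.pi / 2) {w : ℂ}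
    (hw : w.im ∈ Set.uIcc 0 c) :
    ‖w ^ k / (cosh w * cosh w)‖ ≤ 2 ^ k * (2 / Real.cos c) ^ 2 * decayWeight k w.re := by
  have h_abs : |w.im| ≤ |c| := by simpa using Set.abs_sub_left_of_mem_uIcc hw
  have h_cos : 0 < Real.cos c := Real.cos_pos_of_mem_Ioo (abs_lt.1 hc)
  have h_cos_le : Real.cos c ≤ Real.cos w.im := by
    rw [← Real.cos_abs c, ← Real.cos_abs w.im]
    exact Real.cos_le_cos_of_nonneg_of_le_pi (abs_nonneg _) (by linarith [Real.pi_pos]) h_abs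
  have h_norm : ‖w‖ ≤ 2 * (1 + |w.re|) := by
    linarith [norm_le_abs_re_add_abs_im w, abs_nonneg w.re, Real.pi_le_four]
  have h_cosh : Real.cos c * Real.exp |w.re| / 2 ≤ ‖cosh w‖ := by
    have := cos_im_mul_exp_abs_re_le_two_mul_norm_cosh (h_abs.trans hc.le)
    have : Real.cos c * Real.exp |w.re| ≤ Real.cos w.im * Real.exp |w.re| := by gcongr
    linarith
  rw [norm_div, norm_pow, norm_mul]
  calc
    _ ≤ (2 * (1 + |w.re|)) ^ k /
        ((Real.cos c * Real.exp |w.re| / 2) * (Real.cos c * Real.exp |w.re| / 2)) := by gcongr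
    _ = 2 ^ k * (2 / Real.cos c) ^ 2 * decayWeight k w.re := by
      rw [decayWeight, mul_pow, show -2 * |w.re| = -|w.re| + -|w.re| by ring, Real.exp_add,
        Real.exp_neg]
      field_simp

lemma integral_sub_pow_div_cosh_sq (k : ℕ) {a : ℂ} (ha : |a.im| < Real.pi / 2) :
    ∫ x : ℝ, (x - a) ^ k / (cosh (a - x) * cosh (a - x)) = coshMoment k 0 0 := by
  let F (w : ℂ) : ℂ := w ^ k / (cosh w * cosh w)
  have h_im : |-a.im| < Real.pi / 2 := by rwa [abs_neg]
  have h_diff : DifferentiableOn ℂ F (im ⁻¹' Set.uIcc 0 (-a.im)) := by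
    intro w hw
    have h_abs : |w.im| ≤ |-a.im| := by simpa using Set.abs_sub_left_of_mem_uIcc hw
    have h_cosh := cosh_ne_zero_of_abs_im_lt (h_abs.trans_lt h_im)
    exact DifferentiableAt.differentiableWithinAt
      (DifferentiableAt.div (by fun_prop) (by fun_prop) (mul_ne_zero h_cosh h_cosh))
  have h_weight := (tendsto_decayWeight_cocompact k).const_mul
    (2 ^ k * (2 / Real.cos (-a.im)) ^ 2)
  rw [mul_zero] at h_weight
  calc
    _ = ∫ x : ℝ, F ((x - a.re : ℝ) + (-a.im : ℝ) * I) := by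
      refine integral_congr_ae (ae_of_all _ fun x => ?_)
      have h_arg : ((x - a.re : ℝ) : ℂ) + (-a.im : ℝ) * I = x - a := by
        conv_rhs => rw [← re_add_im a]
        push_cast
        ring
      simp only [F, h_arg, ← cosh_neg (a - x), neg_sub]
    _ = ∫ x : ℝ, F (x + (-a.im : ℝ) * I) :=
      integral_sub_right_eq_self (fun x : ℝ => F (x + (-a.im : ℝ) * I)) a.re
    _ = ∫ x : ℝ, F x :=
      integral_add_mul_I_eq_integral h_diff ((integrable_decayWeight k).const_mul _) h_weight
        fun w hw => norm_pow_div_cosh_sq_le k h_im hw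
    _ = coshMoment k 0 0 := by simp only [F, coshMoment, zero_sub, cosh_neg]

lemma tendsto_tanh_atTop : Tendsto Real.tanh atTop (𝓝 1) := by
  have h_exp : Tendsto (fun x : ℝ => Real.exp (-2 * x)) atTop (𝓝 0) :=
    Real.tendsto_exp_atBot.comp (tendsto_id.const_mul_atTop_of_neg (by norm_num))
  have h_lim := (h_exp.const_sub 1).div (h_exp.const_add 1) (by norm_num)
  rw [sub_zero, add_zero, div_one] at h_lim
  refine h_lim.congr fun x => ?_
  simp only [Pi.div_apply]
  rw [Real.tanh_eq, show -2 * x = -x + -x by ring, Real.exp_add, Real.exp_neg]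
  field_simp

lemma tendsto_tanh_atBot : Tendsto Real.tanh atBot (𝓝 (-1)) := by
  simpa [Function.comp_def] using (tendsto_tanh_atTop.comp tendsto_neg_atBot_atTop).neg

lemma coshMoment_zero_zero_zero : coshMoment 0 0 0 = 2 := by
  have h_zero : |(0 : ℂ).im| < Real.pi / 2 := by simpa using Real.pi_div_two_pos
  have h_deriv (x : ℝ) : HasDerivAt (fun x : ℝ => (Real.tanh x : ℂ))
      ((x : ℂ) ^ 0 / (cosh (0 - x) * cosh (0 - x))) x := by
    simpa using (hasDerivAt_tanh_sub_ofReal h_zero x).fun_neg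
  rw [coshMoment, integral_of_hasDerivAt_of_tendsto h_deriv
    (integrable_pow_div_cosh_mul_cosh 0 h_zero h_zero)
    ((continuous_ofReal.tendsto _).comp tendsto_tanh_atBot)
    ((continuous_ofReal.tendsto _).comp tendsto_tanh_atTop)]
  norm_num

/-- The `k`-th Appell polynomial of the density `1 / (2 cosh² x)`: the monic polynomial of degree
`k` whose value at `a` is half of `∫ x ^ k / cosh² (a - x) dx`. -/
noncomputable def momentPolynomial (k : ℕ) : ℂ[X] :=
  ∑ j ∈ Finset.range (k + 1), C (k.choose j * coshMoment j 0 0 / 2) * X ^ (k - j)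

lemma coshMoment_self (k : ℕ) {a : ℂ} (ha : |a.im| < Real.pi / 2) :
    coshMoment k a a = 2 * (momentPolynomial k).eval a := by
  have h_binom (x : ℝ) : (x : ℂ) ^ k / (cosh (a - x) * cosh (a - x)) =
      ∑ j ∈ Finset.range (k + 1), a ^ (k - j) * k.choose j *
        ((x - a) ^ j / (cosh (a - x) * cosh (a - x))) := by
    rw [← sub_add_cancel (x : ℂ) a, add_pow, Finset.sum_div, sub_add_cancel]
    exact Finset.sum_congr rfl fun j _ => by ring
  have h_int (j : ℕ) : Integrable fun x : ℝ => (x - a) ^ j / (cosh (a - x) * cosh (a - x)) := by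
    have h_eval := integrable_eval_div_cosh_mul_cosh ((X - C a) ^ j) ha ha
    simpa only [eval_pow, eval_sub, eval_X, eval_C] using h_eval
  rw [coshMoment]
  simp only [h_binom]
  rw [integral_finsetSum _ fun j _ => (h_int j).const_mul _, momentPolynomial, eval_finsetSum,
    Finset.mul_sum]
  refine Finset.sum_congr rfl fun j _ => ?_
  rw [integral_const_mul, integral_sub_pow_div_cosh_sq j ha]
  simp only [eval_mul, eval_C, eval_pow, eval_X]
  ring

lemma degree_momentPolynomial_sub (k : ℕ) :
    (momentPolynomial k - X ^ k).degree < (k : WithBot ℕ) := by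
  rw [momentPolynomial, Finset.sum_range_succ', coshMoment_zero_zero_zero, Nat.choose_zero_right,
    Nat.cast_one, one_mul, div_self two_ne_zero, C_1, one_mul, Nat.sub_zero, add_sub_cancel_right]
  refine (degree_sum_le _ _).trans_lt ((Finset.sup_lt_iff (WithBot.bot_lt_coe _)).2 fun j hj => ?_)
  refine (degree_C_mul_X_pow_le _ _).trans_lt ?_
  have := Finset.mem_range.1 hj
  exact_mod_cast (by omega : k - (j + 1) < k)

lemma monic_momentPolynomial (k : ℕ) : (momentPolynomial k).Monic := by
  simpa using monic_X_pow_add (degree_momentPolynomial_sub k)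

lemma natDegree_momentPolynomial (k : ℕ) : (momentPolynomial k).natDegree = k := by
  rw [← add_sub_cancel (X ^ k) (momentPolynomial k), natDegree_add_eq_left_of_degree_lt
    (by simpa only [degree_X_pow] using degree_momentPolynomial_sub k), natDegree_X_pow]

end Moments

section CoshIntegrand

variable {N : ℕ}

/-- The integrand of `B_N(t)`, with the differences in the order of Mathlib's Vandermonde
determinant; each factor `(z_m - z_n) sinh (z_m - z_n)` is symmetric in `m` and `n`. -/
noncomputable def coshIntegrand (t : Fin (N + 1) → ℂ) (z : Fin N → ℝ) : ℂ :=
  (∏ i, ∏ j ∈ Finset.Ioi i, ((z j : ℂ) - z i) * sinh (z j - z i)) / ∏ j, ∏ k, cosh (t j - z k)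

lemma prod_filter_lt_div_eq_coshIntegrand (t : Fin (N + 1) → ℂ) (z : Fin N → ℝ) :
    (∏ q : Fin N × Fin N with q.1 < q.2, ((z q.1 : ℂ) - z q.2) * sinh (z q.1 - z q.2)) /
      ∏ j, ∏ k, cosh (t j - z k) = coshIntegrand t z := by
  rw [coshIntegrand, prod_filter_fst_lt_snd_of_symm
    (fun i j => ((z i : ℂ) - z j) * sinh (z i - z j)) fun i j => ?_]
  rw [← neg_sub (z j : ℂ) (z i), sinh_neg, neg_mul_neg]

lemma continuous_coshIntegrand {t : Fin (N + 1) → ℂ} (ht : ∀ j, |(t j).im| < Real.pi / 2) :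
    Continuous (coshIntegrand t) :=
  Continuous.div (by fun_prop) (by fun_prop) fun z =>
    Finset.prod_ne_zero_iff.2 fun j _ => Finset.prod_ne_zero_iff.2 fun k _ =>
      cosh_sub_ofReal_ne_zero (ht j) (z k)

lemma norm_sub_mul_sinh_sub_le (x y : ℝ) :
    ‖((y : ℂ) - x) * sinh (y - x)‖ ≤
      ((1 + |x|) * Real.exp |x|) * ((1 + |y|) * Real.exp |y|) := by
  have h_abs : |y - x| ≤ |x| + |y| := (abs_sub y x).trans_eq (add_comm _ _)
  rw [← ofReal_sub, ← ofReal_sinh, ← ofReal_mul, norm_real, Real.norm_eq_abs, abs_mul]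
  calc
    |y - x| * |Real.sinh (y - x)| ≤ (|x| + |y|) * Real.exp (|x| + |y|) := by
      gcongr
      exact (abs_sinh_le_exp_abs _).trans (Real.exp_le_exp.2 h_abs)
    _ ≤ ((1 + |x|) * (1 + |y|)) * Real.exp (|x| + |y|) := by
      gcongr
      nlinarith [mul_nonneg (abs_nonneg x) (abs_nonneg y)]
    _ = _ := by rw [Real.exp_add]; ring

lemma norm_prod_sub_mul_sinh_sub_le (z : Fin N → ℝ) :
    ‖∏ i, ∏ j ∈ Finset.Ioi i, ((z j : ℂ) - z i) * sinh (z j - z i)‖ ≤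
      ∏ k, ((1 + |z k|) * Real.exp |z k|) ^ (N - 1) := by
  have h_prod := prod_prod_Ioi_mul fun k => (1 + |z k|) * Real.exp |z k|
  rw [Fintype.card_fin] at h_prod
  rw [← h_prod, norm_prod]
  refine Finset.prod_le_prod (fun _ _ => norm_nonneg _) fun i _ => ?_
  rw [norm_prod]
  exact Finset.prod_le_prod (fun _ _ => norm_nonneg _) fun j _ => norm_sub_mul_sinh_sub_le _ _

lemma exists_norm_coshIntegrand_le {t : Fin (N + 1) → ℂ}
    (ht : ∀ j, |(t j).im| < Real.pi / 2) :
    ∃ C, ∀ z, ‖coshIntegrand t z‖ ≤ ∏ k, C * decayWeight (N - 1) (z k) := by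
  choose C _ hC_le using fun j => exists_norm_inv_cosh_sub_le (ht j)
  refine ⟨∏ j, C j, fun z => ?_⟩
  have h_inv : ‖(∏ j, ∏ k, cosh (t j - z k))⁻¹‖ ≤ ∏ k, ∏ j, C j * Real.exp (-|z k|) := by
    simp only [Finset.prod_comm (s := (Finset.univ : Finset (Fin (N + 1)))), norm_prod,
      ← Finset.prod_inv_distrib]
    exact Finset.prod_le_prod (fun _ _ => by positivity) fun k _ =>
      Finset.prod_le_prod (fun _ _ => norm_nonneg _) fun j _ => hC_le j (z k)
  rw [coshIntegrand, div_eq_mul_inv, norm_mul]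
  calc
    _ ≤ (∏ k, ((1 + |z k|) * Real.exp |z k|) ^ (N - 1)) *
        ∏ k, ∏ j, C j * Real.exp (-|z k|) := by
      gcongr
      exact norm_prod_sub_mul_sinh_sub_le z
    _ = ∏ k, (∏ j, C j) * decayWeight (N - 1) (z k) := by
      rw [← Finset.prod_mul_distrib]
      refine Finset.prod_congr rfl fun k _ => ?_
      have h_card : N - 1 + 2 = N + 1 := by have := k.pos; omega
      have h_weight := pow_mul_exp_neg_abs_pow (N - 1) (z k)
      rw [h_card] at h_weight
      rw [Finset.prod_mul_distrib, Finset.prod_const, Finset.card_fin, mul_left_comm, h_weight]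

lemma integrable_coshIntegrand {t : Fin (N + 1) → ℂ} (ht : ∀ j, |(t j).im| < Real.pi / 2) :
    Integrable (coshIntegrand t) := by
  obtain ⟨C, hC⟩ := exists_norm_coshIntegrand_le ht
  have h_int : Integrable fun z : Fin N → ℝ => ∏ k, C * decayWeight (N - 1) (z k) :=
    Integrable.fintype_prod (f := fun _ x => C * decayWeight (N - 1) x) fun _ =>
      (integrable_decayWeight (N - 1)).const_mul C
  exact h_int.mono' (continuous_coshIntegrand ht).aestronglyMeasurable (ae_of_all _ hC)

lemma prod_sinh_mul_coshIntegrand {t : Fin (N + 1) → ℂ}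
    (ht : ∀ j, |(t j).im| < Real.pi / 2) (z : Fin N → ℝ) :
    (∏ i : Fin N, ∏ j ∈ Finset.Ioi i, sinh (t j.succ - t i.succ)) * coshIntegrand t z =
      (Matrix.of fun i k : Fin N => (z k : ℂ) ^ (i : ℕ)).det *
        (Matrix.of fun j k : Fin N => (cosh (t 0 - z k) * cosh (t j.succ - z k))⁻¹).det := by
  have h_vandermonde : (Matrix.of fun i k : Fin N => (z k : ℂ) ^ (i : ℕ)).det =
      ∏ i, ∏ j ∈ Finset.Ioi i, ((z j : ℂ) - z i) := by
    rw [← Matrix.det_vandermonde, ← Matrix.det_transpose]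
    rfl
  have h_ne (j : Fin (N + 1)) (k : Fin N) : cosh (t j - z k) ≠ 0 :=
    cosh_sub_ofReal_ne_zero (ht j) (z k)
  have h_cauchy := det_inv_cosh_sub (fun j : Fin N => t j.succ) (fun k => (z k : ℂ))
    fun j k => h_ne j.succ k
  have h_succ : ∏ j : Fin N, ∏ k, cosh (t j.succ - z k) ≠ 0 :=
    Finset.prod_ne_zero_iff.2 fun j _ => Finset.prod_ne_zero_iff.2 fun k _ => h_ne j.succ k
  have h_row : (Matrix.of fun j k : Fin N => (cosh (t 0 - z k) * cosh (t j.succ - z k))⁻¹).det =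
      (∏ k, cosh (t 0 - z k))⁻¹ * (Matrix.of fun j k : Fin N => (cosh (t j.succ - z k))⁻¹).det := by
    simp only [mul_inv, ← Finset.prod_inv_distrib]
    exact Matrix.det_mul_row _ _
  rw [h_vandermonde, h_row, coshIntegrand, Fin.prod_univ_succ]
  simp only [Finset.prod_mul_distrib]
  rw [eq_div_of_mul_eq h_succ h_cauchy]
  field_simp

lemma sinh_sub_mul_coshMoment_eq_eval_sub_eval (k : ℕ) {a b : ℂ} (ha : |a.im| < Real.pi / 2)
    (hb : |b.im| < Real.pi / 2) :
    (k + 1) * sinh (b - a) * coshMoment k a b =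
      2 * ((momentPolynomial (k + 1)).eval b - (momentPolynomial (k + 1)).eval a) := by
  rw [sinh_sub_mul_coshMoment k ha hb, coshMoment_self _ ha, coshMoment_self _ hb, mul_sub]

lemma factorial_mul_prod_sinh_mul_det_coshMoment {t : Fin (N + 1) → ℂ}
    (ht : ∀ j, |(t j).im| < Real.pi / 2) :
    N.factorial * (∏ j : Fin N, sinh (t j.succ - t 0)) *
        (Matrix.of fun i j : Fin N => coshMoment i (t 0) (t j.succ)).det =
      2 ^ N * ∏ i, ∏ j ∈ Finset.Ioi i, (t j - t i) := by
  have h_factorial : (N.factorial : ℂ) = ∏ i : Fin N, ((i : ℂ) + 1) := by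
    rw [Fin.prod_univ_eq_prod_range fun i => (i : ℂ) + 1, ← Finset.prod_range_add_one_eq_factorial]
    push_cast
    rfl
  have h_two : (2 : ℂ) ^ N = ∏ _i : Fin N, 2 := by simp
  rw [← det_eval_sub_eval (fun i => momentPolynomial i) (fun i => natDegree_momentPolynomial i)
    (fun i => monic_momentPolynomial i), h_factorial, h_two, mul_assoc, ← Matrix.det_mul_row,
    ← Matrix.det_mul_column, ← Matrix.det_mul_column]
  congr 1
  ext i j
  simp only [Matrix.of_apply, ← mul_assoc]
  exact sinh_sub_mul_coshMoment_eq_eval_sub_eval i (ht 0) (ht j.succ)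

theorem prod_sinh_mul_integral_coshIntegrand {t : Fin (N + 1) → ℂ}
    (ht : ∀ j, |(t j).im| < Real.pi / 2) :
    (∏ i, ∏ j ∈ Finset.Ioi i, sinh (t j - t i)) * ∫ z, coshIntegrand t z =
      2 ^ N * ∏ i, ∏ j ∈ Finset.Ioi i, (t j - t i) := by
  have h_andreief := integral_det_mul_det (μ := volume)
    (fun (i : Fin N) (x : ℝ) => (x : ℂ) ^ (i : ℕ))
    (fun (j : Fin N) (x : ℝ) => (cosh (t 0 - x) * cosh (t j.succ - x))⁻¹)
    fun i j => by
      simpa only [div_eq_mul_inv] using integrable_pow_div_cosh_mul_cosh i (ht 0) (ht j.succ)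
  simp only [← prod_sinh_mul_coshIntegrand ht, ← volume_pi, integral_const_mul, Fintype.card_fin,
    ← div_eq_mul_inv] at h_andreief
  rw [← factorial_mul_prod_sinh_mul_det_coshMoment ht, prod_prod_Ioi_fin_succ, mul_assoc,
    h_andreief]
  simp only [coshMoment]
  ring

end CoshIntegrand

/-- The integral `B_N(t)` (Lemma C.2): absolute convergence for
`|Im t_j| < π/2`, and explicit evaluation when the `t_j` are pairwise distinct. -/
theorem statement2 (N : ℕ) (hN : 1 ≤ N) (t : Fin (N + 1) → ℂ)
    (ht : ∀ j : Fin (N + 1), |(t j).im| < Real.pi / 2) :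
    Integrable (fun z : Fin N → ℝ =>
      (∏ q ∈ Finset.univ.filter (fun q : Fin N × Fin N => q.1 < q.2),
        ((z q.1 : ℂ) - (z q.2 : ℂ)) * Complex.sinh ((z q.1 : ℂ) - (z q.2 : ℂ))) /
        ∏ j : Fin (N + 1), ∏ k : Fin N, Complex.cosh (t j - (z k : ℂ)))
    ∧ ((∀ j k : Fin (N + 1), j < k → t j ≠ t k) →
      ∫ z : Fin N → ℝ,
        (∏ q ∈ Finset.univ.filter (fun q : Fin N × Fin N => q.1 < q.2),
          ((z q.1 : ℂ) - (z q.2 : ℂ)) * Complex.sinh ((z q.1 : ℂ) - (z q.2 : ℂ))) /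
          ∏ j : Fin (N + 1), ∏ k : Fin N, Complex.cosh (t j - (z k : ℂ))
      = (2 : ℂ) ^ N *
        ∏ q ∈ Finset.univ.filter (fun q : Fin (N + 1) × Fin (N + 1) => q.1 < q.2),
          (t q.1 - t q.2) / Complex.sinh (t q.1 - t q.2)) := by
  simp only [prod_filter_lt_div_eq_coshIntegrand]
  refine ⟨integrable_coshIntegrand ht, fun h_distinct => ?_⟩
  have h_sinh : ∏ i, ∏ j ∈ Finset.Ioi i, sinh (t j - t i) ≠ 0 :=
    Finset.prod_ne_zero_iff.2 fun i _ => Finset.prod_ne_zero_iff.2 fun j hj =>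
      sinh_ne_zero_of_abs_im_lt ((abs_sub _ _).trans_lt (by linarith [ht i, ht j]))
        (sub_ne_zero.2 (h_distinct i j (Finset.mem_Ioi.1 hj)).symm)
  rw [prod_filter_fst_lt_snd_of_symm (fun i j => (t i - t j) / sinh (t i - t j)) fun i j => by
    rw [← neg_sub (t j) (t i), sinh_neg, neg_div_neg_eq]]
  simp only [Finset.prod_div_distrib]
  rw [← mul_div_assoc, eq_div_iff h_sinh, mul_comm, prod_sinh_mul_integral_coshIntegrand ht]
end

section
/- Let N ≥ 1 and set 𝒞_N = {(u,t) ∈ ℂ^{N+1}×ℂ^{N+1} : |Re(u_{N+1}−u_i)| < 2 for i = 1,…,N and |Im t_j| < π/2 for j = 1,…,N+1}, and for (u,t) ∈ 𝒞_N set C_N(u,t) = ∫_{ℝ^N} ∏_{1≤j<k≤N} sinh(z_j−z_k) / ∏_{j=1}^{N+1} ∏_{k=1}^{N} cosh(t_j−z_k) · exp(Σ_{j=1}^{N} z_j (u_{N+1}−u_j)) dz. Then there exists a function H, holomorphic (jointly analytic in all 2(N+1) complex variables) on the open set 𝒞_N, such that C_N(u,t) = H(u,t) · ∏_{1≤j<k≤N}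 (u_j−u_k) for all (u,t) ∈ 𝒞_N. -/
open MeasureTheory Complex

/-!
Locally uniformly on `𝒞_N` the integrand decays exponentially in `z`, so `C_N` is holomorphic there.
When `u_a = u_b`, exchanging `z_a` and `z_b` changes the sign of the integrand, because only the
product of the `sinh (z_j - z_k)` is not symmetric; hence `C_N` vanishes on the hyperplane
`u_a = u_b`. A holomorphic function vanishing on the zero set of a linear form is divisible by that
form: along a line transversal to the hyperplane the quotient is given by Cauchy's integral formula,
which depends holomorphically on the line. The quotient still vanishes on every other hyperplane
`u_c = u_d`, by continuity, so the factors `u_j - u_k` can be divided out one after the other.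
-/

section ParametricIntegral

open Filter Metric Topology

variable {α : Type*} [MeasurableSpace α] {μ : Measure α}

theorem aestronglyMeasurable_fderiv_apply {𝕜 E F : Type*} [NontriviallyNormedField 𝕜]
    [NormedAddCommGroup E] [NormedSpace 𝕜 E] [NormedAddCommGroup F] [NormedSpace 𝕜 F]
    {f : E → α → F} {x₀ : E} (hf_meas : ∀ᶠ x in 𝓝 x₀, AEStronglyMeasurable (f x) μ)
    (hf_diff : ∀ᵐ a ∂μ, DifferentiableAt 𝕜 (f · a) x₀) (v : E) :
    AEStronglyMeasurable (fun a ↦ fderiv 𝕜 (f · a) x₀ v) μ := by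
  have line_tendsto : Tendsto (fun s : 𝕜 ↦ x₀ + s • v) (𝓝[≠] 0) (𝓝 x₀) :=
    (Continuous.tendsto' (by fun_prop) 0 x₀ (by simp)).mono_left nhdsWithin_le_nhds
  obtain ⟨s, hs, hs_meas⟩ := exists_seq_forall_of_frequently
    (line_tendsto.eventually hf_meas).frequently
  refine aestronglyMeasurable_of_tendsto_ae atTop
    (fun n ↦ ((hs_meas n).sub hf_meas.self_of_nhds).const_smul (s n)⁻¹) ?_
  filter_upwards [hf_diff] with a ha
  simpa only [inv_inv, Function.comp_apply, Pi.smul_apply, Pi.sub_apply] using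
    ha.hasFDerivAt.lim v (tendsto_norm_inv_nhdsNE_zero_atTop.comp hs)

theorem aestronglyMeasurable_fderiv {𝕜 E F : Type*} [NontriviallyNormedField 𝕜]
    [CompleteSpace 𝕜] [NormedAddCommGroup E] [NormedSpace 𝕜 E] [FiniteDimensional 𝕜 E]
    [NormedAddCommGroup F] [NormedSpace 𝕜 F] {f : E → α → F} {x₀ : E}
    (hf_meas : ∀ᶠ x in 𝓝 x₀, AEStronglyMeasurable (f x) μ)
    (hf_diff : ∀ᵐ a ∂μ, DifferentiableAt 𝕜 (f · a) x₀) :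
    AEStronglyMeasurable (fun a ↦ fderiv 𝕜 (f · a) x₀) μ := by
  let B := Module.finBasis 𝕜 E
  have expand (L : E →L[𝕜] F) :
      L = ∑ i, ContinuousLinearMap.smulRightL 𝕜 E F (B.coord i).toContinuousLinearMap (L (B i)) :=
    ContinuousLinearMap.coe_injective (B.ext fun j ↦ by simp [Finsupp.single_apply])
  rw [funext fun a ↦ expand (fderiv 𝕜 (f · a) x₀)]
  exact Finset.aestronglyMeasurable_fun_sum _ fun i _ ↦
    (ContinuousLinearMap.continuous _).comp_aestronglyMeasurable
      (aestronglyMeasurable_fderiv_apply hf_meas hf_diff (B i))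

variable {E F : Type*} [NormedAddCommGroup E] [NormedSpace ℂ E] [FiniteDimensional ℂ E]
  [NormedAddCommGroup F] [NormedSpace ℂ F]

-- The Schwarz lemma turns the bound on `f` into the Lipschitz bound at `x₀` that domination needs.
theorem differentiableAt_integral_of_dominated {f : E → α → F} {x₀ : E} {s : Set E}
    {bound : α → ℝ} (hs : s ∈ 𝓝 x₀) (hf_meas : ∀ x ∈ s, AEStronglyMeasurable (f x) μ)
    (hf_diff : ∀ᵐ a ∂μ, DifferentiableOn ℂ (f · a) s)
    (hf_bound : ∀ᵐ a ∂μ, ∀ x ∈ s, ‖f x a‖ ≤ bound a) (bound_integrable : Integrable bound μ) :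
    DifferentiableAt ℂ (fun x ↦ ∫ a, f x a ∂μ) x₀ := by
  obtain ⟨ε, ε_pos, hε⟩ := Metric.mem_nhds_iff.1 hs
  have hf_diffAt : ∀ᵐ a ∂μ, DifferentiableAt ℂ (f · a) x₀ :=
    hf_diff.mono fun a ha ↦ ha.differentiableAt hs
  have hf_lip : ∀ᵐ a ∂μ, ∀ x ∈ ball x₀ ε,
      ‖f x a - f x₀ a‖ ≤ 2 * bound a / ε * ‖x - x₀‖ := by
    filter_upwards [hf_diff, hf_bound] with a ha_diff ha_bound x hx
    have mapsTo : Set.MapsTo (f · a) (ball x₀ ε) (closedBall (f x₀ a) (2 * bound a)) := by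
      intro y hy
      rw [mem_closedBall, dist_eq_norm]
      linarith [norm_sub_le (f y a) (f x₀ a), ha_bound y (hε hy),
        ha_bound x₀ (mem_of_mem_nhds hs)]
    simpa only [dist_eq_norm] using
      dist_le_div_mul_dist_of_mapsTo_ball (ha_diff.mono hε) mapsTo hx
  refine (hasFDerivAt_integral_of_dominated_loc_of_lip' (ball_mem_nhds x₀ ε_pos)
    (fun x hx ↦ hf_meas x (hε hx)) ?_
    (aestronglyMeasurable_fderiv (eventually_of_mem hs hf_meas) hf_diffAt) hf_lip
    ((bound_integrable.const_mul 2).div_const ε)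
    (hf_diffAt.mono fun a ha ↦ ha.hasFDerivAt)).2.differentiableAt
  exact bound_integrable.mono' (hf_meas x₀ (mem_of_mem_nhds hs))
    (hf_bound.mono fun a ha ↦ ha x₀ (mem_of_mem_nhds hs))

theorem differentiableAt_circleIntegral {f : E → ℂ → F} {x₀ : E} {c : ℂ} {R : ℝ}
    (hf : ∀ z ∈ sphere c |R|, ∀ᶠ p in 𝓝 (x₀, z), DifferentiableAt ℂ (Function.uncurry f) p) :
    DifferentiableAt ℂ (fun x ↦ ∮ z in C(c, R), f x z) x₀ := by
  obtain ⟨C, hC⟩ := (isCompact_sphere c |R|).exists_bound_of_continuousOn (f := f x₀)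
    fun z hz ↦ ((hf z hz).self_of_nhds.continuousAt.comp
      (f := fun z ↦ (x₀, z)) (by fun_prop)).continuousWithinAt
  have near : ∀ᶠ x in 𝓝 x₀, ∀ z ∈ sphere c |R|,
      DifferentiableAt ℂ (Function.uncurry f) (x, z) ∧ ‖f x z‖ < C + 1 := by
    refine (isCompact_sphere c |R|).eventually_forall_of_forall_eventually fun z hz ↦
      (hf z hz).and ?_
    exact (hf z hz).self_of_nhds.continuousAt.norm.eventually_lt_const
      ((hC z hz).trans_lt (lt_add_one C))
  simp only [circleIntegral_def_Icc]
  refine differentiableAt_integral_of_dominated (bound := fun _ ↦ |R| * (C + 1)) near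
    (fun x hx ↦ ?_) (.of_forall fun θ x hx ↦ ?_) (.of_forall fun θ x hx ↦ ?_)
    (integrable_const _)
  · have continuous_f : Continuous fun θ ↦ f x (circleMap c R θ) :=
      continuous_iff_continuousAt.2 fun θ ↦
        (hx _ (circleMap_mem_sphere' c R θ)).1.continuousAt.comp
          (f := fun θ ↦ (x, circleMap c R θ)) (by fun_prop)
    simp only [deriv_circleMap]
    exact (((continuous_circleMap 0 R).mul_const I).smul continuous_f).aestronglyMeasurable
  · exact (((hx _ (circleMap_mem_sphere' c R θ)).1.comp x (f := fun x ↦ (x, circleMap c R θ))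
      (by fun_prop)).const_smul _).differentiableWithinAt
  · simpa [norm_smul] using mul_le_mul_of_nonneg_left
      (hx _ (circleMap_mem_sphere' c R θ)).2.le (abs_nonneg R)

end ParametricIntegral

section HyperplaneQuotient

open Filter Metric Topology

variable {E F : Type*} [NormedAddCommGroup E] [NormedSpace ℂ E] [NormedAddCommGroup F]
  [NormedSpace ℂ F]

open scoped Classical in
/-- The quotient `f / l` of a function `f` vanishing on the hyperplane `l = 0`, where `v` is a
vector with `l v = 1`. On the hyperplane the quotient is the derivative of `f` along `v`. -/
noncomputable def hyperplaneQuotient (f : E → F) (l : E →L[ℂ] ℂ) (v x : E) : F :=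
  if l x = 0 then deriv (fun s : ℂ ↦ f (x + s • v)) 0 else (l x)⁻¹ • f x

variable {f : E → F} {l : E →L[ℂ] ℂ} {v : E}

theorem smul_hyperplaneQuotient {x : E} (hf : l x = 0 → f x = 0) :
    l x • hyperplaneQuotient f l v x = f x := by
  by_cases hx : l x = 0
  · simp [hx, hf hx]
  · simp [hyperplaneQuotient, hx]

theorem hyperplaneQuotient_eq_dslope {x : E} (hx : f (x - l x • v) = 0) :
    hyperplaneQuotient f l v x = dslope (fun s : ℂ ↦ f (x + s • v)) (-l x) 0 := by
  by_cases hlx : l x = 0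
  · simp [hyperplaneQuotient, hlx]
  · rw [dslope_of_ne _ (by simpa [eq_comm] using hlx)]
    simp [hyperplaneQuotient, hlx, slope, ← sub_eq_add_neg, hx]

-- Cauchy's formula, after removing the singularity of `s ↦ (l x + s)⁻¹ • f (x + s • v)`.
theorem hyperplaneQuotient_eq_circleIntegral [CompleteSpace F] {x : E} {r : ℝ}
    (hf : ∀ s ∈ closedBall (0 : ℂ) r, DifferentiableAt ℂ f (x + s • v))
    (hx : f (x - l x • v) = 0) (hr : ‖l x‖ < r) :
    hyperplaneQuotient f l v x =
      (2 * Real.pi * I : ℂ)⁻¹ • ∮ s in C(0, r), s⁻¹ • (l x + s)⁻¹ • f (x + s • v) := by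
  have hr_pos : 0 < r := (norm_nonneg _).trans_lt hr
  have hlx : -l x ∈ ball (0 : ℂ) r := by simpa using hr
  have dslope_diff : DifferentiableOn ℂ (dslope (fun s : ℂ ↦ f (x + s • v)) (-l x))
      (closedBall 0 r) :=
    (differentiableOn_dslope (mem_of_superset (isOpen_ball.mem_nhds hlx)
      ball_subset_closedBall)).2 fun s hs ↦
        ((hf s hs).comp s (f := fun s : ℂ ↦ x + s • v) (by fun_prop)).differentiableWithinAt
  rw [hyperplaneQuotient_eq_dslope hx,
    ← (dslope_diff.diffContOnCl_ball subset_rfl).two_pi_i_inv_smul_circleIntegral_sub_inv_smul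
      (mem_ball_self hr_pos)]
  congr 1
  refine circleIntegral.integral_congr hr_pos.le fun s hs ↦ ?_
  have hs_ne : s ≠ -l x := by
    rintro rfl
    simp only [mem_sphere_iff_norm, sub_zero, norm_neg] at hs
    exact hr.ne hs
  simp [dslope_of_ne _ hs_ne, slope, ← sub_eq_add_neg, hx, add_comm s]

theorem differentiableAt_circleIntegral_inv_smul [FiniteDimensional ℂ E] {x₀ : E} {r : ℝ}
    (hr : 0 < r) (hlx₀ : l x₀ = 0)
    (hf : ∀ s ∈ sphere (0 : ℂ) r, ∀ᶠ y in 𝓝 (x₀ + s • v), DifferentiableAt ℂ f y) :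
    DifferentiableAt ℂ (fun x ↦ ∮ s in C(0, r), s⁻¹ • (l x + s)⁻¹ • f (x + s • v)) x₀ := by
  refine differentiableAt_circleIntegral fun s hs ↦ ?_
  rw [abs_of_pos hr] at hs
  have hs_ne : s ≠ 0 := ne_of_mem_sphere hs hr.ne'
  have near_f : ∀ᶠ p : E × ℂ in 𝓝 (x₀, s), DifferentiableAt ℂ f (p.1 + p.2 • v) :=
    (Continuous.tendsto (f := fun p : E × ℂ ↦ p.1 + p.2 • v) (by fun_prop) (x₀, s)).eventually
      (hf s hs)
  have near_l : ∀ᶠ p : E × ℂ in 𝓝 (x₀, s), l p.1 + p.2 ≠ 0 :=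
    (Continuous.continuousAt (by fun_prop)).eventually_ne (by simpa [hlx₀] using hs_ne)
  have near_s : ∀ᶠ p : E × ℂ in 𝓝 (x₀, s), p.2 ≠ 0 := continuousAt_snd.eventually_ne hs_ne
  filter_upwards [near_f, near_l, near_s] with p hpf hpl hps
  have f_diff : DifferentiableAt ℂ (fun p : E × ℂ ↦ f (p.1 + p.2 • v)) p :=
    hpf.comp p (f := fun p : E × ℂ ↦ p.1 + p.2 • v) (by fun_prop)
  have l_diff : DifferentiableAt ℂ (fun p : E × ℂ ↦ l p.1 + p.2) p := by fun_prop
  exact (differentiableAt_snd.inv hps).smul ((l_diff.inv hpl).smul f_diff)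

theorem differentiableAt_hyperplaneQuotient_of_eq_zero [FiniteDimensional ℂ E] [CompleteSpace F]
    {U : Set E} {x₀ : E} (hU : IsOpen U) (hf : DifferentiableOn ℂ f U)
    (hf_zero : ∀ x ∈ U, l x = 0 → f x = 0) (hv : l v = 1) (hx₀ : x₀ ∈ U) (hlx₀ : l x₀ = 0) :
    DifferentiableAt ℂ (hyperplaneQuotient f l v) x₀ := by
  have diffAt {x : E} (hx : x ∈ U) : DifferentiableAt ℂ f x := hf.differentiableAt (hU.mem_nhds hx)
  obtain ⟨r, hr, hrU⟩ : ∃ r > 0, ∀ s ∈ closedBall (0 : ℂ) r, x₀ + s • v ∈ U := by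
    refine nhds_basis_closedBall.eventually_iff.1 (ContinuousAt.eventually_mem ?_ ?_)
    · fun_prop
    · simpa using hU.mem_nhds hx₀
  have near_disc : ∀ᶠ x in 𝓝 x₀, ∀ s ∈ closedBall (0 : ℂ) r, x + s • v ∈ U :=
    (isCompact_closedBall 0 r).eventually_forall_of_forall_eventually fun s hs ↦
      (Continuous.continuousAt (by fun_prop)).eventually_mem (hU.mem_nhds (hrU s hs))
  have near_root : ∀ᶠ x in 𝓝 x₀, ‖l x‖ < r :=
    l.continuous.norm.continuousAt.eventually_lt_const (by simpa [hlx₀] using hr)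
  have cauchy : hyperplaneQuotient f l v =ᶠ[𝓝 x₀] fun x ↦
      (2 * Real.pi * I : ℂ)⁻¹ • ∮ s in C(0, r), s⁻¹ • (l x + s)⁻¹ • f (x + s • v) := by
    filter_upwards [near_disc, near_root] with x hxU hxr
    refine hyperplaneQuotient_eq_circleIntegral (fun s hs ↦ diffAt (hxU s hs)) ?_ hxr
    have hmem := hxU (-l x) (by simpa using hxr.le)
    rw [neg_smul, ← sub_eq_add_neg] at hmem
    exact hf_zero _ hmem (by simp [hv])
  refine DifferentiableAt.congr_of_eventuallyEq ?_ cauchy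
  exact (differentiableAt_circleIntegral_inv_smul hr hlx₀ fun s hs ↦ (hU.eventually_mem
    (hrU s (sphere_subset_closedBall hs))).mono fun _ ↦ diffAt).const_smul _

theorem differentiableOn_hyperplaneQuotient [FiniteDimensional ℂ E] [CompleteSpace F]
    {U : Set E} (hU : IsOpen U) (hf : DifferentiableOn ℂ f U)
    (hf_zero : ∀ x ∈ U, l x = 0 → f x = 0) (hv : l v = 1) :
    DifferentiableOn ℂ (hyperplaneQuotient f l v) U := by
  intro x hx
  refine DifferentiableAt.differentiableWithinAt ?_
  by_cases hlx : l x = 0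
  · exact differentiableAt_hyperplaneQuotient_of_eq_zero hU hf hf_zero hv hx hlx
  · have off_hyperplane : hyperplaneQuotient f l v =ᶠ[𝓝 x] fun y ↦ (l y)⁻¹ • f y := by
      filter_upwards [l.continuous.continuousAt.eventually_ne hlx] with y hy
      exact if_neg hy
    exact ((l.differentiableAt.inv hlx).smul
      (hf.differentiableAt (hU.mem_nhds hx))).congr_of_eventuallyEq off_hyperplane

-- Near a common zero of `l` and `m`, move inside `ker m` along a direction in which `l ≠ 0`.
theorem eq_zero_of_smul_eq_zero_of_ker_not_le {U : Set E} (hU : IsOpen U) {g : E → F}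
    (hg : ContinuousOn g U) {l m : E →L[ℂ] ℂ}
    (hlm : ¬ LinearMap.ker m.toLinearMap ≤ LinearMap.ker l.toLinearMap)
    (h_zero : ∀ x ∈ U, m x = 0 → l x • g x = 0) {x : E} (hx : x ∈ U) (hmx : m x = 0) :
    g x = 0 := by
  by_cases hlx : l x = 0
  swap
  · exact (smul_eq_zero.1 (h_zero x hx hmx)).resolve_left hlx
  obtain ⟨w, hmw, hlw⟩ := SetLike.not_le_iff_exists.1 hlm
  rw [LinearMap.mem_ker, ContinuousLinearMap.coe_coe] at hmw hlw
  have line_tendsto : Tendsto (fun s : ℂ ↦ x + s • w) (𝓝[≠] 0) (𝓝 x) := by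
    refine (Continuous.tendsto' ?_ 0 x (by simp)).mono_left nhdsWithin_le_nhds
    fun_prop
  have g_line_zero : ∀ᶠ s : ℂ in 𝓝[≠] 0, g (x + s • w) = 0 := by
    filter_upwards [line_tendsto.eventually (hU.mem_nhds hx), self_mem_nhdsWithin] with s hsU hs
    refine (smul_eq_zero.1 (h_zero _ hsU (by simp [hmx, hmw]))).resolve_left ?_
    simpa [hlx, hlw] using hs
  exact tendsto_nhds_unique_of_eventuallyEq
    ((hg.continuousAt (hU.mem_nhds hx)).tendsto.comp line_tendsto) tendsto_const_nhds g_line_zero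

theorem exists_differentiableOn_eq_prod_smul [FiniteDimensional ℂ E] [CompleteSpace F] {ι : Type*}
    {U : Set E} (hU : IsOpen U) (hf : DifferentiableOn ℂ f U) {l : ι → E →L[ℂ] ℂ} {S : Finset ι}
    (hl_ne : ∀ q ∈ S, l q ≠ 0)
    (hl_ker : (S : Set ι).Pairwise fun p q ↦
      ¬ LinearMap.ker (l p).toLinearMap ≤ LinearMap.ker (l q).toLinearMap)
    (hf_zero : ∀ q ∈ S, ∀ x ∈ U, l q x = 0 → f x = 0) :
    ∃ g : E → F, DifferentiableOn ℂ g U ∧ ∀ x ∈ U, f x = (∏ q ∈ S, l q x) • g x := by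
  classical
  induction S using Finset.induction_on generalizing f with
  | empty => exact ⟨f, hf, by simp⟩
  | insert q S hq ih =>
    simp only [Finset.forall_mem_insert] at hl_ne hf_zero
    rw [Finset.coe_insert] at hl_ker
    obtain ⟨v, hv⟩ : ∃ v, l q v = 1 :=
      LinearMap.surjective (f := (l q).toLinearMap)
        (by simpa [← ContinuousLinearMap.coe_inj] using hl_ne.1) 1
    have quotient_diff := differentiableOn_hyperplaneQuotient hU hf hf_zero.1 hv
    have quotient_zero (p) (hp : p ∈ S) (x) (hx : x ∈ U) (hpx : l p x = 0) :
        hyperplaneQuotient f (l q) v x = 0 := by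
      refine eq_zero_of_smul_eq_zero_of_ker_not_le hU quotient_diff.continuousOn
        (hl_ker (Set.mem_insert_of_mem q hp) (Set.mem_insert q _) (ne_of_mem_of_not_mem hp hq))
        (fun y hy hpy ↦ ?_) hx hpx
      rw [smul_hyperplaneQuotient (hf_zero.1 y hy), hf_zero.2 p hp y hy hpy]
    obtain ⟨g, hg, hfg⟩ := ih quotient_diff hl_ne.2 (hl_ker.mono (Set.subset_insert _ _))
      quotient_zero
    refine ⟨g, hg, fun x hx ↦ ?_⟩
    rw [Finset.prod_insert hq, mul_smul, ← hfg x hx, smul_hyperplaneQuotient (hf_zero.1 x hx)]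

end HyperplaneQuotient

section ExponentialBounds

open Finset

theorem prod_filter_fst_lt_snd {ι M : Type*} [Fintype ι] [Preorder ι] [LocallyFiniteOrderTop ι]
    [DecidableLT ι] [CommMonoid M] (f : ι → ι → M) :
    ∏ q ∈ univ.filter (fun q : ι × ι ↦ q.1 < q.2), f q.1 q.2 = ∏ i, ∏ j ∈ Ioi i, f i j :=
  prod_finset_product' _ _ _ (by simp)

theorem prod_filter_fst_lt_snd_mul_eq_prod_pow {ι M : Type*} [Fintype ι] [LinearOrder ι]
    [LocallyFiniteOrderTop ι] [LocallyFiniteOrderBot ι] [CommMonoid M] (a : ι → M) :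
    ∏ q ∈ univ.filter (fun q : ι × ι ↦ q.1 < q.2), (a q.1 * a q.2) =
      ∏ i, a i ^ (Fintype.card ι - 1) := by
  rw [prod_filter_fst_lt_snd fun i j ↦ a i * a j,
    prod_prod_Ioi_mul_eq_prod_prod_off_diag fun _ i ↦ a i]
  simp [card_compl]

theorem integrable_exp_neg_mul_abs {d : ℝ} (hd : 0 < d) :
    Integrable fun x : ℝ ↦ Real.exp (-d * |x|) := by
  rw [← integrableOn_univ, ← Set.Iic_union_Ioi (a := (0 : ℝ))]
  refine IntegrableOn.union ?_ ?_
  · refine (integrableOn_exp_mul_Iic hd 0).congr_fun (fun x hx ↦ ?_) measurableSet_Iic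
    simp [abs_of_nonpos (Set.mem_Iic.1 hx)]
  · refine (integrableOn_exp_mul_Ioi (neg_lt_zero.2 hd) 0).congr_fun (fun x hx ↦ ?_)
      measurableSet_Ioi
    simp [abs_of_pos (Set.mem_Ioi.1 hx)]

theorem norm_sinh_le_exp_abs_re (z : ℂ) : ‖sinh z‖ ≤ Real.exp |z.re| := by
  have norm_exp_le (w : ℂ) : ‖exp w‖ ≤ Real.exp |w.re| := by
    rw [norm_exp]
    exact Real.exp_le_exp.2 (le_abs_self _)
  have norm_exp_neg_le := norm_exp_le (-z)
  rw [neg_re, abs_neg] at norm_exp_neg_le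
  rw [sinh, norm_div, norm_ofNat]
  linarith [norm_sub_le (exp z) (exp (-z)), norm_exp_le z]

theorem re_cosh (z : ℂ) : (cosh z).re = Real.cosh z.re * Real.cos z.im := by
  conv_lhs => rw [← re_add_im z, cosh_add, cosh_mul_I, sinh_mul_I]
  simp [← ofReal_cosh, ← ofReal_sinh, ← ofReal_cos, ← ofReal_sin]

theorem exp_abs_re_mul_cos_im_le_norm_cosh {z : ℂ} (hz : 0 ≤ Real.cos z.im) :
    Real.exp |z.re| / 2 * Real.cos z.im ≤ ‖cosh z‖ :=
  calc Real.exp |z.re| / 2 * Real.cos z.im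
      ≤ Real.cosh z.re * Real.cos z.im := by
        gcongr
        rw [← Real.cosh_abs, Real.cosh_eq]
        linarith [Real.exp_pos (-|z.re|)]
    _ = (cosh z).re := (re_cosh z).symm
    _ ≤ ‖cosh z‖ := re_le_norm _

theorem norm_prod_sinh_sub_le {ι : Type*} [Fintype ι] [LinearOrder ι] [LocallyFiniteOrderTop ι]
    [LocallyFiniteOrderBot ι] (z : ι → ℝ) :
    ‖∏ q ∈ univ.filter (fun q : ι × ι ↦ q.1 < q.2), sinh ((z q.1 : ℂ) - z q.2)‖ ≤
      ∏ i, Real.exp |z i| ^ (Fintype.card ι - 1) := by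
  rw [← prod_filter_fst_lt_snd_mul_eq_prod_pow, norm_prod]
  refine prod_le_prod (fun _ _ ↦ norm_nonneg _) fun q _ ↦ ?_
  calc ‖sinh ((z q.1 : ℂ) - z q.2)‖
      ≤ Real.exp |z q.1 - z q.2| := by simpa using norm_sinh_le_exp_abs_re (z q.1 - z q.2)
    _ ≤ Real.exp (|z q.1| + |z q.2|) := Real.exp_le_exp.2 (abs_sub _ _)
    _ = Real.exp |z q.1| * Real.exp |z q.2| := Real.exp_add _ _

theorem le_norm_cosh_sub_ofReal {t : ℂ} {d M : ℝ} (hd : 0 ≤ d) (ht_im : d ≤ Real.cos t.im)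
    (ht_re : |t.re| ≤ M) (x : ℝ) :
    Real.exp (-M) / 2 * d * Real.exp |x| ≤ ‖cosh (t - x)‖ := by
  have exp_le : Real.exp (|x| - M) ≤ Real.exp |t.re - x| := by
    rw [abs_sub_comm]
    exact Real.exp_le_exp.2 (by linarith [abs_sub_abs_le_abs_sub x t.re])
  calc Real.exp (-M) / 2 * d * Real.exp |x|
      = Real.exp (|x| - M) / 2 * d := by rw [sub_eq_add_neg, Real.exp_add]; ring
    _ ≤ Real.exp |t.re - x| / 2 * Real.cos t.im := by gcongr
    _ ≤ ‖cosh (t - x)‖ := by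
        simpa using exp_abs_re_mul_cos_im_le_norm_cosh (z := t - x) (by simpa using hd.trans ht_im)

theorem le_norm_prod_cosh_sub {ι κ : Type*} [Fintype ι] [Fintype κ] {t : κ → ℂ} {d M : ℝ}
    (hd : 0 ≤ d) (ht_im : ∀ j, d ≤ Real.cos (t j).im) (ht_re : ∀ j, |(t j).re| ≤ M) (z : ι → ℝ) :
    (∏ _j : κ, ∏ _k : ι, Real.exp (-M) / 2 * d) * ∏ k, Real.exp |z k| ^ Fintype.card κ ≤
      ‖∏ j, ∏ k, cosh (t j - z k)‖ := by
  have exp_pow : ∏ k, Real.exp |z k| ^ Fintype.card κ = ∏ _j : κ, ∏ k, Real.exp |z k| := by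
    rw [prod_comm]
    simp
  simp only [exp_pow, ← prod_mul_distrib, norm_prod]
  gcongr with j _ k _
  exact le_norm_cosh_sub_ofReal hd (ht_im j) (ht_re j) (z k)

theorem norm_exp_sum_ofReal_mul_le {ι : Type*} [Fintype ι] {w : ι → ℂ} {b : ℝ}
    (hw : ∀ i, |(w i).re| ≤ b) (z : ι → ℝ) :
    ‖exp (∑ i, (z i : ℂ) * w i)‖ ≤ ∏ i, Real.exp (b * |z i|) := by
  rw [norm_exp, re_sum, ← Real.exp_sum]
  refine Real.exp_le_exp.2 (sum_le_sum fun i _ ↦ ?_)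
  calc ((z i : ℂ) * w i).re
      ≤ |z i * (w i).re| := by rw [re_ofReal_mul]; exact le_abs_self _
    _ = |(w i).re| * |z i| := by rw [abs_mul, mul_comm]
    _ ≤ b * |z i| := by gcongr; exact hw i

end ExponentialBounds

section HyperbolicIntegral

open Filter Finset Topology

variable {N : ℕ}

/-- The integrand of `C_N(u, t)`, where `ut` stands for `(u, t)`. The paper's `u_{N+1}` is
`u (Fin.last N)` and its `u_1, …, u_N` are the values of `u` on the range of `Fin.castSucc`. -/
noncomputable def hyperbolicIntegrand (ut : (Fin (N + 1) → ℂ) × (Fin (N + 1) → ℂ))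
    (z : Fin N → ℝ) : ℂ :=
  (∏ q ∈ univ.filter (fun q : Fin N × Fin N ↦ q.1 < q.2), sinh ((z q.1 : ℂ) - z q.2)) /
    (∏ j : Fin (N + 1), ∏ k : Fin N, cosh (ut.2 j - z k)) *
    exp (∑ j : Fin N, (z j : ℂ) * (ut.1 (Fin.last N) - ut.1 j.castSucc))

/-- The set `𝒞_N` of pairs `(u, t)` on which the integral `C_N` converges absolutely. -/
def convergenceDomain (N : ℕ) : Set ((Fin (N + 1) → ℂ) × (Fin (N + 1) → ℂ)) :=
  {ut | (∀ i : Fin N, |(ut.1 (Fin.last N) - ut.1 i.castSucc).re| < 2) ∧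
    ∀ j, |(ut.2 j).im| < Real.pi / 2}

/-- A set on which the integrands of `C_N` are uniformly bounded by a multiple of
`∏ k, exp (-d * |z k|)`. For small `d` and large `M` it is a neighbourhood of any given point of
`𝒞_N`. -/
def uniformDecayRegion (N : ℕ) (d M : ℝ) : Set ((Fin (N + 1) → ℂ) × (Fin (N + 1) → ℂ)) :=
  {ut | (∀ i : Fin N, |(ut.1 (Fin.last N) - ut.1 i.castSucc).re| ≤ 2 - d) ∧
    (∀ j, d ≤ Real.cos (ut.2 j).im) ∧ ∀ j, |(ut.2 j).re| ≤ M}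

theorem isOpen_convergenceDomain : IsOpen (convergenceDomain N) := by
  simp only [convergenceDomain, Set.ofPred_and, Set.ofPred_forall]
  exact (isOpen_iInter_of_finite fun i ↦ isOpen_lt (by fun_prop) (by fun_prop)).inter
    (isOpen_iInter_of_finite fun j ↦ isOpen_lt (by fun_prop) (by fun_prop))

theorem exists_uniformDecayRegion_mem_nhds {ut : (Fin (N + 1) → ℂ) × (Fin (N + 1) → ℂ)}
    (hut : ut ∈ convergenceDomain N) : ∃ d > 0, ∃ M, uniformDecayRegion N d M ∈ 𝓝 ut := by
  have small_d : ∀ᶠ d : ℝ in 𝓝 0,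
      (∀ i : Fin N, |(ut.1 (Fin.last N) - ut.1 i.castSucc).re| < 2 - d) ∧
        ∀ j, d < Real.cos (ut.2 j).im := by
    refine (eventually_all.2 fun i ↦ ?_).and (eventually_all.2 fun j ↦ ?_)
    · exact (Continuous.tendsto' (by fun_prop) 0 2 (sub_zero 2)).eventually_const_lt (hut.1 i)
    · exact eventually_lt_nhds (Real.cos_pos_of_mem_Ioo (abs_lt.1 (hut.2 j)))
  obtain ⟨d, ⟨hd_re, hd_cos⟩, hd⟩ :=
    ((small_d.filter_mono nhdsWithin_le_nhds).and (self_mem_nhdsWithin (s := Set.Ioi 0))).exists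
  refine ⟨d, hd, ‖ut‖ + 1, ?_⟩
  have near_re (i : Fin N) :
      ∀ᶠ x in 𝓝 ut, |(x.1 (Fin.last N) - x.1 i.castSucc).re| < 2 - d :=
    (Continuous.continuousAt (by fun_prop)).eventually_lt_const (hd_re i)
  have near_cos (j) : ∀ᶠ x in 𝓝 ut, d < Real.cos (x.2 j).im :=
    (Continuous.continuousAt (by fun_prop)).eventually_const_lt (hd_cos j)
  have near_norm : ∀ᶠ x in 𝓝 ut, ‖x‖ < ‖ut‖ + 1 :=
    continuous_norm.continuousAt.eventually_lt_const (lt_add_one _)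
  filter_upwards [eventually_all.2 near_re, eventually_all.2 near_cos, near_norm]
    with x hx_re hx_cos hx_norm
  refine ⟨fun i ↦ (hx_re i).le, fun j ↦ (hx_cos j).le, fun j ↦ ?_⟩
  exact (abs_re_le_norm _).trans
    ((norm_le_pi_norm x.2 j).trans ((norm_snd_le x).trans hx_norm.le))

variable {ut : (Fin (N + 1) → ℂ) × (Fin (N + 1) → ℂ)} {d M : ℝ}

theorem norm_hyperbolicIntegrand_le (hd : 0 < d) (hut : ut ∈ uniformDecayRegion N d M)
    (z : Fin N → ℝ) :
    ‖hyperbolicIntegrand ut z‖ ≤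
      (∏ _j : Fin (N + 1), ∏ _k : Fin N, Real.exp (-M) / 2 * d)⁻¹ *
        ∏ k, Real.exp (-d * |z k|) := by
  obtain ⟨hut_re, hut_cos, hut_M⟩ := hut
  have sinh_le := norm_prod_sinh_sub_le z
  have le_cosh := le_norm_prod_cosh_sub hd.le hut_cos hut_M z
  have exp_le := norm_exp_sum_ofReal_mul_le hut_re z
  rw [Fintype.card_fin] at sinh_le le_cosh
  set K := ∏ _j : Fin (N + 1), ∏ _k : Fin N, Real.exp (-M) / 2 * d
  have K_pos : 0 < K := by positivity
  have exponents (k : Fin N) : Real.exp |z k| ^ (N - 1) * Real.exp ((2 - d) * |z k|) =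
      Real.exp |z k| ^ (N + 1) * Real.exp (-d * |z k|) := by
    obtain ⟨n, rfl⟩ := Nat.exists_eq_add_one.2 k.pos
    simp only [← Real.exp_nat_mul, ← Real.exp_add]
    congr 1
    push_cast [Nat.add_sub_cancel]
    ring
  rw [hyperbolicIntegrand, norm_mul, norm_div]
  calc _ ≤ (∏ k, Real.exp |z k| ^ (N - 1)) / (K * ∏ k, Real.exp |z k| ^ (N + 1)) *
        ∏ k, Real.exp ((2 - d) * |z k|) := by gcongr
    _ = (K * ∏ k, Real.exp |z k| ^ (N + 1))⁻¹ *
        ∏ k, Real.exp |z k| ^ (N - 1) * Real.exp ((2 - d) * |z k|) := by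
      rw [prod_mul_distrib]
      ring
    _ = K⁻¹ * ∏ k, Real.exp (-d * |z k|) := by
      simp only [exponents, prod_mul_distrib]
      field_simp

theorem differentiableAt_hyperbolicIntegrand (hut : ∀ j, 0 < Real.cos (ut.2 j).im)
    (z : Fin N → ℝ) : DifferentiableAt ℂ (fun x ↦ hyperbolicIntegrand x z) ut := by
  have cosh_ne (j) (k) : cosh (ut.2 j - z k) ≠ 0 := by
    have le_norm_cosh :=
      exp_abs_re_mul_cos_im_le_norm_cosh (z := ut.2 j - z k) (by simpa using (hut j).le)
    rw [← norm_pos_iff]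
    exact (mul_pos (by positivity) (by simpa using hut j)).trans_le le_norm_cosh
  have prod_ne : ∏ j, ∏ k, cosh (ut.2 j - z k) ≠ 0 :=
    prod_ne_zero_iff.2 fun j _ ↦ prod_ne_zero_iff.2 fun k _ ↦ cosh_ne j k
  unfold hyperbolicIntegrand
  fun_prop (disch := assumption)

theorem measurable_hyperbolicIntegrand (ut : (Fin (N + 1) → ℂ) × (Fin (N + 1) → ℂ)) :
    Measurable (hyperbolicIntegrand ut) := by
  unfold hyperbolicIntegrand
  fun_prop

theorem differentiableOn_integral_hyperbolicIntegrand :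
    DifferentiableOn ℂ (fun ut ↦ ∫ z : Fin N → ℝ, hyperbolicIntegrand ut z)
      (convergenceDomain N) := by
  intro ut hut
  obtain ⟨d, hd, M, h_nhds⟩ := exists_uniformDecayRegion_mem_nhds hut
  refine (differentiableAt_integral_of_dominated h_nhds
    (fun x _ ↦ (measurable_hyperbolicIntegrand x).aestronglyMeasurable)
    (.of_forall fun z x hx ↦ (differentiableAt_hyperbolicIntegrand
      (fun j ↦ hd.trans_le (hx.2.1 j)) z).differentiableWithinAt)
    (.of_forall fun z x hx ↦ norm_hyperbolicIntegrand_le hd hx z) ?_).differentiableWithinAt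
  exact (Integrable.fintype_prod fun _ ↦ integrable_exp_neg_mul_abs hd).const_mul _

theorem integral_comp_perm {ι E G : Type*} [Fintype ι] [MeasureSpace E]
    [SigmaFinite (volume : Measure E)] [NormedAddCommGroup G] [NormedSpace ℝ G]
    (σ : Equiv.Perm ι) (f : (ι → E) → G) : ∫ z, f (z ∘ σ) = ∫ z, f z :=
  (volume_preserving_arrowCongr' σ.symm (.refl E) (.id _)).integral_comp' f

theorem prod_sinh_sub_comp_perm (σ : Equiv.Perm (Fin N)) (z : Fin N → ℂ) :
    ∏ q ∈ univ.filter (fun q : Fin N × Fin N ↦ q.1 < q.2), sinh (z (σ q.1) - z (σ q.2)) =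
      σ.sign * ∏ q ∈ univ.filter (fun q : Fin N × Fin N ↦ q.1 < q.2), sinh (z q.1 - z q.2) := by
  rw [prod_filter_fst_lt_snd fun i j ↦ sinh (z i - z j),
    prod_filter_fst_lt_snd fun i j ↦ sinh (z (σ i) - z (σ j))]
  exact σ.prod_Ioi_comp_eq_sign_mul_prod (f := fun i j ↦ sinh (z i - z j))
    fun i j ↦ by rw [← sinh_neg, neg_sub]

theorem hyperbolicIntegrand_comp_perm {σ : Equiv.Perm (Fin N)}
    (hσ : ∀ i, ut.1 (σ i).castSucc = ut.1 i.castSucc) (z : Fin N → ℝ) :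
    hyperbolicIntegrand ut (z ∘ σ) = σ.sign * hyperbolicIntegrand ut z := by
  have cosh_comp (j) : ∏ k, cosh (ut.2 j - z (σ k)) = ∏ k, cosh (ut.2 j - z k) :=
    Equiv.prod_comp σ fun k ↦ cosh (ut.2 j - z k)
  have exponent_comp : ∑ j, (z (σ j) : ℂ) * (ut.1 (Fin.last N) - ut.1 j.castSucc) =
      ∑ j, (z j : ℂ) * (ut.1 (Fin.last N) - ut.1 j.castSucc) := by
    rw [← Equiv.sum_comp σ fun j ↦ (z j : ℂ) * (ut.1 (Fin.last N) - ut.1 j.castSucc)]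
    simp only [hσ]
  simp only [hyperbolicIntegrand, Function.comp_apply, cosh_comp, exponent_comp,
    prod_sinh_sub_comp_perm σ fun i ↦ (z i : ℂ)]
  ring

theorem integral_hyperbolicIntegrand_eq_zero {a b : Fin N} (hab : a ≠ b)
    (hut : ut.1 a.castSucc = ut.1 b.castSucc) : ∫ z, hyperbolicIntegrand ut z = 0 := by
  have swap_invariant (i) : ut.1 (Equiv.swap a b i).castSucc = ut.1 i.castSucc := by
    rcases eq_or_ne i a with rfl | hia
    · simp [hut]
    · rcases eq_or_ne i b with rfl | hib
      · simp [hut]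
      · rw [Equiv.swap_apply_of_ne_of_ne hia hib]
  have antisymmetry := integral_comp_perm (Equiv.swap a b) (hyperbolicIntegrand ut)
  simp only [hyperbolicIntegrand_comp_perm swap_invariant, Equiv.Perm.sign_swap hab,
    Units.val_neg, Units.val_one, Int.cast_neg, Int.cast_one, neg_one_mul, integral_neg]
    at antisymmetry
  exact neg_eq_self.1 antisymmetry

end HyperbolicIntegral

section CoordinateDifference

variable {ι G : Type*} [NormedAddCommGroup G] [NormedSpace ℂ G]

variable (ι G) in
/-- The linear form `(u, t) ↦ u i - u j` on `(ι → ℂ) × G`, where `q = (i, j)`. Its kernel is the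
hyperplane `u i = u j`. -/
noncomputable def coordDiff (q : ι × ι) : (ι → ℂ) × G →L[ℂ] ℂ :=
  (.proj q.1 - .proj q.2 : (ι → ℂ) →L[ℂ] ℂ).comp (.fst ℂ (ι → ℂ) G)

@[simp]
theorem coordDiff_apply (q : ι × ι) (x : (ι → ℂ) × G) :
    coordDiff ι G q x = x.1 q.1 - x.1 q.2 := by
  simp [coordDiff]

theorem coordDiff_ne_zero {q : ι × ι} (hq : q.1 ≠ q.2) : coordDiff ι G q ≠ 0 := by
  classical
  intro h
  simpa [hq.symm] using DFunLike.congr_fun h (Pi.single q.1 1, 0)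

theorem ker_coordDiff_not_le {p q : ι × ι} (hq : q.1 ≠ q.2) (hpq : p ≠ q) (hpq' : p ≠ q.swap) :
    ¬ LinearMap.ker (coordDiff ι G p).toLinearMap ≤
      LinearMap.ker (coordDiff ι G q).toLinearMap := by
  classical
  obtain ⟨c, hc, hcp⟩ : ∃ c, (c = q.1 ∨ c = q.2) ∧ c ≠ p.1 ∧ c ≠ p.2 := by
    by_contra! h
    have q_fst := h q.1 (.inl rfl)
    have q_snd := h q.2 (.inr rfl)
    grind [Prod.ext_iff]
  refine SetLike.not_le_iff_exists.2 ⟨(Pi.single c 1, 0), ?_, ?_⟩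
  · simp [hcp.1, hcp.2]
  · rcases hc with rfl | rfl
    · simp [hq.symm]
    · simp [hq]

end CoordinateDifference

/-- The quotient function `Q_N(u,t) = C_N(u,t)/∏_{j<k≤N}(u_j−u_k)` extends to a
function `H` holomorphic (jointly analytic) on the open set `𝒞_N`, i.e. there is a holomorphic
`H` on `𝒞_N` with `C_N(u,t) = H(u,t) · ∏_{1≤j<k≤N}(u_j−u_k)` on `𝒞_N`. -/
theorem statement4 (N : ℕ) (hN : 1 ≤ N) :
    ∃ H : (Fin (N + 1) → ℂ) × (Fin (N + 1) → ℂ) → ℂ,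
      DifferentiableOn ℂ H
        {ut : (Fin (N + 1) → ℂ) × (Fin (N + 1) → ℂ) |
          (∀ i : Fin N, |(ut.1 (Fin.last N) - ut.1 (Fin.castSucc i)).re| < 2) ∧
          ∀ j : Fin (N + 1), |(ut.2 j).im| < Real.pi / 2} ∧
      ∀ ut : (Fin (N + 1) → ℂ) × (Fin (N + 1) → ℂ),
        (∀ i : Fin N, |(ut.1 (Fin.last N) - ut.1 (Fin.castSucc i)).re| < 2) →
        (∀ j : Fin (N + 1), |(ut.2 j).im| < Real.pi / 2) →
        (∫ z : Fin N → ℝ,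
          (∏ q ∈ Finset.univ.filter (fun q : Fin N × Fin N => q.1 < q.2),
            Complex.sinh ((z q.1 : ℂ) - (z q.2 : ℂ))) /
            (∏ j : Fin (N + 1), ∏ k : Fin N, Complex.cosh (ut.2 j - (z k : ℂ))) *
            Complex.exp (∑ j : Fin N, (z j : ℂ) * (ut.1 (Fin.last N) - ut.1 (Fin.castSucc j))))
        = H ut *
          ∏ q ∈ Finset.univ.filter (fun q : Fin N × Fin N => q.1 < q.2),
            (ut.1 (Fin.castSucc q.1) - ut.1 (Fin.castSucc q.2)) := by
  let l (q : Fin N × Fin N) : (Fin (N + 1) → ℂ) × (Fin (N + 1) → ℂ) →L[ℂ] ℂ :=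
    coordDiff _ _ (q.map Fin.castSucc Fin.castSucc)
  let S : Finset (Fin N × Fin N) := Finset.univ.filter fun q ↦ q.1 < q.2
  have lt_of_mem {q} (hq : q ∈ S) : q.1 < q.2 := (Finset.mem_filter.1 hq).2
  have l_ne_zero (q) (hq : q ∈ S) : l q ≠ 0 :=
    coordDiff_ne_zero (Fin.castSucc_lt_castSucc_iff.2 (lt_of_mem hq)).ne
  have ker_l_not_le : (S : Set (Fin N × Fin N)).Pairwise fun p q ↦
      ¬ LinearMap.ker (l p).toLinearMap ≤ LinearMap.ker (l q).toLinearMap := by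
    intro p hp q hq hpq
    have hp_lt := lt_of_mem hp
    have hq_lt := lt_of_mem hq
    apply ker_coordDiff_not_le <;> grind [Prod.map, Fin.castSucc_inj]
  obtain ⟨H, hH, hC⟩ := exists_differentiableOn_eq_prod_smul isOpen_convergenceDomain
    differentiableOn_integral_hyperbolicIntegrand l_ne_zero ker_l_not_le fun q hq ut _ hlq ↦
      integral_hyperbolicIntegrand_eq_zero (lt_of_mem hq).ne
        (sub_eq_zero.1 (by simpa [l] using hlq))
  exact ⟨H, hH, fun ut hu ht ↦ (hC ut ⟨hu, ht⟩).trans (by simp [l, S, mul_comm])⟩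
end
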